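/- For any g₁,...,g_n ∈ G = GL₂⁺(ℚ) modulo scalars, the image of the upper half plane ℍ under the map f(z) = (j(g₁z),...,j(g_nz)) is a geometrically irreducible algebraic curve in ℂⁿ defined over ℚ(j(S)), where S is the set of special points; moreover this image is a strongly special subvariety of ℂⁿ and contains infinitely many special points. -/

import Mathlib

set_option synthInstance.maxHeartbeats 800000
set_option maxHeartbeats 1600000
noncomputable section
open UpperHalfPlane Matrix MatrixGroups Classical

namespace JPaper

/-! ### The group `G = GL₂⁺(ℚ)` modulo scalars and its action on `ℍ` -/

/-- `GL₂⁺(ℚ)`, the group of 2×2 rational matrices with positive determinant. -/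
abbrev GL2QPos : Type := Matrix.GLPos (Fin 2) ℚ

lemma map_mem_glpos (g : GL2QPos) :
    (Matrix.GeneralLinearGroup.map (algebraMap ℚ ℝ) : GL (Fin 2) ℚ →* GL (Fin 2) ℝ) g ∈
      Matrix.GLPos (Fin 2) ℝ := by
  have hg := g.2
  rw [Matrix.mem_glpos] at hg ⊢
  rw [Matrix.GeneralLinearGroup.val_det_apply] at hg ⊢
  show (0:ℝ) < Matrix.det _
  have : ((Matrix.GeneralLinearGroup.map (algebraMap ℚ ℝ) (g : GL (Fin 2) ℚ) :
      GL (Fin 2) ℝ) : Matrix (Fin 2) (Fin 2) ℝ) = ((g : GL (Fin 2) ℚ) :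
      Matrix (Fin 2) (Fin 2) ℚ).map (algebraMap ℚ ℝ) := rfl
  rw [this, ← RingHom.mapMatrix_apply, ← RingHom.map_det]
  simpa using (Rat.cast_pos (K := ℝ)).mpr hg

/-- The homomorphism `GL₂⁺(ℚ) →* GL₂⁺(ℝ)` induced by `ℚ ⊆ ℝ`. -/
def toGLPosR : GL2QPos →* Matrix.GLPos (Fin 2) ℝ :=
  MonoidHom.codRestrict
    ((Matrix.GeneralLinearGroup.map (algebraMap ℚ ℝ)).comp (Matrix.GLPos (Fin 2) ℚ).subtype)
    (Matrix.GLPos (Fin 2) ℝ) (fun g => map_mem_glpos g)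

/-- `G := GL₂⁺(ℚ)ᵃᵈ`, i.e. `GL₂⁺(ℚ)` modulo its centre (the scalar matrices). -/
abbrev GQ : Type := GL2QPos ⧸ Subgroup.center GL2QPos

/-- The action of an element of `G = GL₂⁺(ℚ)` modulo scalars on the upper half plane,
via a choice of representative (the centre acts trivially on `ℍ`, so this recovers the
natural action by Möbius transformations). -/
def gqSmul (g : GQ) (τ : ℍ) : ℍ := toGLPosR g.out • τ

/-- The image of `SL₂(ℤ)` in `GL₂⁺(ℚ)`. -/
def sl2ZtoGLQ (γ : Matrix.SpecialLinearGroup (Fin 2) ℤ) : GL2QPos :=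
  ⟨Matrix.SpecialLinearGroup.toGL
      (Matrix.SpecialLinearGroup.map (Int.castRingHom ℚ) γ), by
    rw [Matrix.mem_glpos, Matrix.GeneralLinearGroup.val_det_apply]
    show (0:ℚ) < Matrix.det _
    have : ((Matrix.SpecialLinearGroup.toGL
        (Matrix.SpecialLinearGroup.map (Int.castRingHom ℚ) γ) : GL (Fin 2) ℚ) :
        Matrix (Fin 2) (Fin 2) ℚ).det = 1 :=
      (Matrix.SpecialLinearGroup.map (Int.castRingHom ℚ) γ).2
    rw [this]; norm_num⟩

/-- The image of `SL₂(ℤ)` in `G = GL₂⁺(ℚ)` modulo scalars. -/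
def sl2ZtoGQ (γ : Matrix.SpecialLinearGroup (Fin 2) ℤ) : GQ :=
  QuotientGroup.mk (sl2ZtoGLQ γ)

/-! ### The modular `j`-function and special points -/

/-- The classical modular `j`-function on the upper half plane, defined via the
Eisenstein series `g₂, g₃` of the lattice `ℤτ + ℤ`. -/
def jFunction (τ : ℍ) : ℂ :=
  let g2 : ℂ := 60 * ∑' p : ℤ × ℤ,
    if p = 0 then 0 else (((p.1 : ℂ) * (τ : ℂ) + (p.2 : ℂ)) ^ 4)⁻¹
  let g3 : ℂ := 140 * ∑' p : ℤ × ℤ,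
    if p = 0 then 0 else (((p.1 : ℂ) * (τ : ℂ) + (p.2 : ℂ)) ^ 6)⁻¹
  1728 * g2 ^ 3 / (g2 ^ 3 - 27 * g3 ^ 2)

/-- A point of `ℍ` is special (a CM point) if it is fixed by some nontrivial element
of `G = GL₂⁺(ℚ)` modulo scalars. -/
def IsSpecial (τ : ℍ) : Prop := ∃ g : GQ, g ≠ 1 ∧ gqSmul g τ = τ

/-- The set of special points of `ℍ`. -/
def SpecialSet : Set ℍ := {τ | IsSpecial τ}

/-- The set `j(S) ⊆ ℂ` of singular moduli, i.e. `j`-values of special points. -/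
def jSpecialValues : Set ℂ := jFunction '' SpecialSet

/-- The subfield `ℚ(j(S))` of `ℂ` generated by the singular moduli. -/
def QjS : Subfield ℂ := Subfield.closure jSpecialValues

/-- An integral matrix is primitive if the gcd of its entries is 1. -/
def IsPrimitiveIntMatrix (A : Matrix (Fin 2) (Fin 2) ℤ) : Prop :=
  Int.gcd (Int.gcd (A 0 0) (A 0 1)) (Int.gcd (A 1 0) (A 1 1)) = 1

/-- `G_N`: the set of elements of `G` which, after multiplying through by an integer to
clear denominators in all entries, have determinant `N`. -/
def GQdet (N : ℕ) : Set GQ :=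
  {g | ∃ A : Matrix (Fin 2) (Fin 2) ℤ, IsPrimitiveIntMatrix A ∧ A.det = (N : ℤ) ∧
    ∃ c : ℚ, ((g.out : GL (Fin 2) ℚ) : Matrix (Fin 2) (Fin 2) ℚ) =
      c • A.map (fun x => (x : ℚ))}

/-- The `N`-th classical modular polynomial `Φ_N ∈ ℤ[X,Y]`, characterised by the property
that `Φ_N(z,w) = 0` iff `z` and `w` are the `j`-invariants of elliptic curves related by a
cyclic `N`-isogeny, i.e. iff `w = j(gτ)`, `z = j(τ)` for some `τ ∈ ℍ` and `g ∈ G_N`. -/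
def modularPoly (N : ℕ) : MvPolynomial (Fin 2) ℤ :=
  if h : ∃ P : MvPolynomial (Fin 2) ℤ, P ≠ 0 ∧ ∀ z w : ℂ,
      (MvPolynomial.aeval ![z, w]) P = 0 ↔
        ∃ (τ : ℍ) (g : GQ), g ∈ GQdet N ∧ jFunction τ = z ∧ jFunction (gqSmul g τ) = w
  then h.choose else 0


variable {n : ℕ}

/-- The image of `ℍ` under `z ↦ (j(g₁z), ..., j(gₙz))`. -/
def heckeImage (g : Fin n → GQ) : Set (Fin n → ℂ) :=
  Set.range (fun τ : ℍ => fun i => jFunction (gqSmul (g i) τ))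

/-- A subset of `ℂⁿ` is an (affine) algebraic set if it is the common zero locus of a
family of polynomials. -/
def IsAlgebraicSet (V : Set (Fin n → ℂ)) : Prop :=
  ∃ ps : Set (MvPolynomial (Fin n) ℂ),
    V = {v | ∀ p ∈ ps, MvPolynomial.eval v p = 0}

/-- A subset of `ℂⁿ` is an algebraic set defined over a subfield `k ⊆ ℂ` if it is the
common zero locus of a family of polynomials with coefficients in `k`. -/
def IsAlgebraicSetOver (k : Subfield ℂ) (V : Set (Fin n → ℂ)) : Prop :=
  ∃ ps : Set (MvPolynomial (Fin n) ℂ),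
    (∀ p ∈ ps, ∀ m, p.coeff m ∈ k) ∧
    V = {v | ∀ p ∈ ps, MvPolynomial.eval v p = 0}

/-- A (geometrically) irreducible algebraic set: a nonempty algebraic set which is not
covered by two algebraic sets unless it is contained in one of them. -/
def IsIrreducibleAlgSet (V : Set (Fin n → ℂ)) : Prop :=
  IsAlgebraicSet V ∧ V.Nonempty ∧
    ∀ A B : Set (Fin n → ℂ), IsAlgebraicSet A → IsAlgebraicSet B →
      V ⊆ A ∪ B → V ⊆ A ∨ V ⊆ B

/-- An algebraic set is a curve if it is infinite and some coordinate projection has all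
fibres finite (i.e. it has dimension one). -/
def IsAlgebraicCurve (V : Set (Fin n → ℂ)) : Prop :=
  IsAlgebraicSet V ∧ V.Infinite ∧ ∃ i : Fin n, ∀ z : ℂ, {v ∈ V | v i = z}.Finite

/-- A strongly special subvariety of `ℂⁿ` (for the product of modular curves): an
irreducible algebraic set, with no constant coordinate, which is an irreducible component
of an algebraic set cut out by modular polynomial relations `Φ_N(x_k, x_l) = 0` among the
coordinates. -/
def IsStronglySpecial (V : Set (Fin n → ℂ)) : Prop :=
  IsIrreducibleAlgSet V ∧
  (∀ i : Fin n, ¬ ∃ c : ℂ, ∀ v ∈ V, v i = c) ∧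
  ∃ R : Set (Fin n × Fin n × ℕ),
    (∀ r ∈ R, 0 < r.2.2) ∧
    (V ⊆ {v | ∀ r ∈ R, MvPolynomial.aeval ![v r.1, v r.2.1] (modularPoly r.2.2) = 0}) ∧
    (∀ V' : Set (Fin n → ℂ), IsIrreducibleAlgSet V' → V ⊆ V' →
      V' ⊆ {v | ∀ r ∈ R, MvPolynomial.aeval ![v r.1, v r.2.1] (modularPoly r.2.2) = 0} →
      V' = V)

end JPaper

/-!
Each `τ ↦ j(gτ)` lies in the ring of holomorphic functions on `ℍ` of moderate growth at the cusps.
By the identity theorem this ring is a domain, and `SL₂(ℤ)` acts on it with invariants `ℂ[j]`. The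
functions `j(gτ)` have finite orbits, because up to `SL₂(ℤ)` on the left there are only finitely
many integral matrices of given determinant. The product of `Y - f'` over the orbit of such a
function `f` is therefore a monic polynomial in `Y` over `ℂ[j]`, and these polynomials, taken for
all polynomial combinations `f` of the coordinates, cut out the Hecke image as an algebraic curve.
The curve is irreducible because the ring is a domain.

The images of special points are dense in the curve and have coordinates in `ℚ(j(S))`, so expanding
the equations of the curve in a basis of `ℂ` over `ℚ(j(S))` makes them descend to that field.

For strong specialness, normalise one coordinate to `j(τ)`. The rational `q`-expansions of `j(τ)`
and `j(Nτ)` force the monic relation between them to have rational coefficients, so that the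
polynomial `Φ_N` exists over `ℤ`. Relations `Φ_N(j(τ), x) = 0` cut out a finite union of Hecke
images, and a Hecke image contained in another one is equal to it.
-/

namespace JPaper

open Filter Topology Asymptotics ModularForm Function Polynomial
open scoped Manifold

/-! ### The `j`-function as a quotient of modular forms -/

lemma tsum_eisenstein_eq {k : ℕ} (hk : 3 ≤ k) (τ : ℍ) :
    ∑' p : ℤ × ℤ, (if p = 0 then 0 else (((p.1 : ℂ) * (τ : ℂ) + (p.2 : ℂ)) ^ k)⁻¹) =
      2 * riemannZeta k * E hk τ := by
  have h : E hk τ = (1 / 2 : ℂ) * eisensteinSeries (N := 1) 0 k τ := rfl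
  rw [h, show 2 * riemannZeta k * ((1 / 2 : ℂ) * eisensteinSeries (N := 1) 0 k τ) =
    riemannZeta k * eisensteinSeries (N := 1) 0 k τ by ring,
    ← tsum_eisSummand_eq_riemannZeta_mul_eisensteinSeries hk τ,
    ← (finTwoArrowEquiv ℤ).symm.tsum_eq]
  refine tsum_congr fun p ↦ ?_
  split_ifs with hp
  · subst hp
    simp [EisensteinSeries.eisSummand, show k ≠ 0 by omega]
  · simp [EisensteinSeries.eisSummand]

lemma riemannZeta_six : riemannZeta 6 = (Real.pi : ℂ) ^ 6 / 945 := by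
  have h := riemannZeta_two_mul_nat (k := 3) (by norm_num)
  have hB : _root_.bernoulli 6 = 1 / 42 := by
    rw [bernoulli_eq_bernoulli'_of_ne_one (by decide), bernoulli'_def]
    norm_num [Finset.sum_range_succ, Nat.choose,
      bernoulli'_eq_zero_of_odd (n := 5) (by decide) (by decide)]
  norm_num [hB, show Nat.factorial 6 = 720 by decide] at h
  rw [h]
  ring

lemma jFunction_eq (τ : ℍ) : jFunction τ = E₄ τ ^ 3 / ModularForm.discriminant τ := by
  have h4 := tsum_eisenstein_eq (show 3 ≤ 4 by norm_num) τ
  have h6 := tsum_eisenstein_eq (show 3 ≤ 6 by norm_num) τ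
  have hΔ := discriminant_eq_E₄_cube_sub_E₆_sq τ
  have hΔ0 := ModularForm.discriminant_ne_zero τ
  have hπ : (Real.pi : ℂ) ≠ 0 := by exact_mod_cast Real.pi_ne_zero
  unfold jFunction
  simp only [h4, h6]
  push_cast
  rw [riemannZeta_four, riemannZeta_six, div_eq_div_iff _ hΔ0]
  · rw [hΔ]; ring
  · have : (60 * (2 * ((Real.pi : ℂ) ^ 4 / 90) * E₄ τ)) ^ 3 -
        27 * (140 * (2 * ((Real.pi : ℂ) ^ 6 / 945) * E₆ τ)) ^ 2 =
        4096 * (Real.pi : ℂ) ^ 12 * ModularForm.discriminant τ := by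
      rw [hΔ]; ring
    rw [this]
    exact mul_ne_zero (mul_ne_zero (by norm_num) (pow_ne_zero _ hπ)) hΔ0

lemma apply_smul_of_slashInvariant {F : Type*} [FunLike F ℍ ℂ] {k : ℤ}
    [SlashInvariantFormClass F 𝒮ℒ k] (f : F) (γ : SL(2, ℤ)) (τ : ℍ) :
    f (γ • τ) = denom γ τ ^ k * f τ := by
  have h := congrFun (SlashInvariantForm.slash_action_eqn (Γ := 𝒮ℒ) f
    (γ : GL (Fin 2) ℝ) ⟨γ, rfl⟩) τ
  rw [← SL_slash, SL_slash_apply, _root_.zpow_neg] at h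
  have hd := zpow_ne_zero k (denom_ne_zero (γ : GL (Fin 2) ℝ) τ)
  rw [← h]
  field_simp

lemma jFunction_smul (γ : SL(2, ℤ)) (τ : ℍ) : jFunction (γ • τ) = jFunction τ := by
  have h4 := apply_smul_of_slashInvariant E₄ γ τ
  have h12 : ModularForm.discriminant (γ • τ) = denom γ τ ^ (12 : ℤ) *
    ModularForm.discriminant τ := apply_smul_of_slashInvariant CuspForm.discriminant γ τ
  have hd := denom_ne_zero (γ : GL (Fin 2) ℝ) τ
  have hΔ0 := ModularForm.discriminant_ne_zero τ
  rw [jFunction_eq, jFunction_eq, h4, h12, div_eq_div_iff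
    (mul_ne_zero (zpow_ne_zero _ hd) hΔ0) hΔ0, mul_pow, ← zpow_natCast, ← _root_.zpow_mul]
  norm_num
  ring

lemma mdifferentiable_jFunction : MDiff jFunction := by
  have h : jFunction = fun τ ↦ E₄ τ ^ 3 / CuspForm.discriminant τ := funext jFunction_eq
  rw [h]
  exact (E₄.holo'.pow 3).div CuspForm.discriminant.holo' ModularForm.discriminant_ne_zero

lemma periodic_comp_ofComplex_of_vadd {h : ℍ → ℂ} (hv : ∀ τ, h ((1 : ℝ) +ᵥ τ) = h τ) :
    Periodic (h ∘ ofComplex) ((1 : ℝ) : ℂ) := by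
  intro z
  by_cases hz : 0 < z.im
  · have hz1 : 0 < (z + ((1 : ℝ) : ℂ)).im := by simpa using hz
    simp only [Function.comp_apply, ofComplex_apply_of_im_pos hz, ofComplex_apply_of_im_pos hz1]
    rw [← hv ⟨z, hz⟩]
    congr 1
    ext
    simp [coe_vadd, add_comm]
  · have hz1 : ¬ 0 < (z + ((1 : ℝ) : ℂ)).im := by simpa using hz
    simp only [Function.comp_apply, ofComplex_apply_of_im_nonpos (not_lt.mp hz),
      ofComplex_apply_of_im_nonpos (not_lt.mp hz1)]

lemma isBigO_qParam_sub_valueAtInfty {f : ℍ → ℂ} (hper : ∀ τ, f ((1 : ℝ) +ᵥ τ) = f τ)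
    (hhol : MDiff f) (hbdd : IsBoundedAtImInfty f) :
    (fun τ ↦ f τ - valueAtInfty f) =O[atImInfty] fun τ : ℍ ↦ Periodic.qParam 1 (τ : ℂ) := by
  refine (exp_decay_sub_atImInfty one_pos (periodic_comp_ofComplex_of_vadd hper)
    hhol hbdd).trans (isBigO_of_le _ fun τ ↦ ?_)
  rw [Periodic.norm_qParam, Real.norm_of_nonneg (Real.exp_pos _).le]
  rfl

lemma tendsto_valueAtInfty {f : ℍ → ℂ} (hper : ∀ τ, f ((1 : ℝ) +ᵥ τ) = f τ)
    (hhol : MDiff f) (hbdd : IsBoundedAtImInfty f) :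
    Tendsto f atImInfty (𝓝 (valueAtInfty f)) :=
  tendsto_sub_nhds_zero_iff.mp <| (isBigO_qParam_sub_valueAtInfty hper hhol hbdd).trans_tendsto
    (qParam_tendsto_atImInfty one_pos)

lemma tendsto_E₄_atImInfty : Tendsto E₄ atImInfty (𝓝 1) := by
  have hper (τ : ℍ) : E₄ ((1 : ℝ) +ᵥ τ) = E₄ τ :=
    SlashInvariantForm.vAdd_apply_of_mem_strictPeriods E₄ τ one_mem_strictPeriods_SL
  have hbdd : IsBoundedAtImInfty E₄ := ModularFormClass.bdd_at_infty E₄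
  have hper' := periodic_comp_ofComplex_of_vadd hper
  have h : Tendsto E₄ atImInfty (𝓝 (valueAtInfty E₄)) := tendsto_valueAtInfty hper E₄.holo' hbdd
  rwa [← qExpansion_coeff_zero one_pos
    (analyticAt_cuspFunction_zero one_pos hper' E₄.holo' hbdd) hper',
    EisensteinSeries.E_qExpansion_coeff_zero _ ⟨2, rfl⟩] at h

lemma tendsto_qParam_mul_jFunction :
    Tendsto (fun τ : ℍ ↦ Periodic.qParam 1 τ * jFunction τ) atImInfty (𝓝 1) := by
  have h := (tendsto_E₄_atImInfty.pow 3).div tendsto_atImInfty_tprod_one_sub_eta_q_pow one_ne_zero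
  simp only [one_pow, div_one] at h
  refine h.congr fun τ ↦ ?_
  have hq : Periodic.qParam 1 (τ : ℂ) ≠ 0 := Periodic.qParam_ne_zero _
  rw [jFunction_eq, discriminant_eq_q_prod, Pi.div_apply]
  field_simp

lemma tendsto_norm_jFunction : Tendsto (fun τ ↦ ‖jFunction τ‖) atImInfty atTop := by
  have hq : Tendsto (fun τ : ℍ ↦ ‖Periodic.qParam 1 (τ : ℂ)‖⁻¹) atImInfty atTop := by
    refine tendsto_inv_nhdsGT_zero.comp (tendsto_nhdsWithin_iff.mpr ⟨?_, ?_⟩)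
    · simpa using (qParam_tendsto_atImInfty one_pos).norm
    · exact Eventually.of_forall fun τ ↦ norm_pos_iff.mpr (Periodic.qParam_ne_zero _)
  refine (hq.atTop_mul_pos one_pos (by simpa using tendsto_qParam_mul_jFunction.norm)).congr
    fun τ ↦ ?_
  rw [inv_mul_cancel_left₀ (norm_ne_zero_iff.mpr (Periodic.qParam_ne_zero _))]

lemma eq_const_of_smul_invariant {h : ℍ → ℂ} (hd : MDiff h)
    (hinv : ∀ (γ : SL(2, ℤ)) τ, h (γ • τ) = h τ) (hb : IsBoundedAtImInfty h) :
    ∃ c, h = Function.const ℍ c := by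
  have hslash (γ : SL(2, ℤ)) : h ∣[(0 : ℤ)] γ = h := by
    ext τ
    rw [SL_slash_apply, hinv]
    simp
  let F : ModularForm 𝒮ℒ 0 :=
    { toFun := h
      slash_action_eq' := fun _ ⟨γ, hγ⟩ ↦ hγ ▸ hslash γ
      holo' := hd
      bdd_at_cusps' {c} hc := by
        rw [Subgroup.IsArithmetic.isCusp_iff_isCusp_SL2Z] at hc
        rw [OnePoint.isBoundedAt_iff_forall_SL2Z hc]
        intro γ _
        rwa [hslash γ] }
  exact ModularFormClass.levelOne_weight_zero_const F

lemma jFunction_surjective : Surjective jFunction := by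
  intro w
  by_contra! hw
  have hlim : Tendsto (fun τ ↦ 1 / (jFunction τ - w)) atImInfty (𝓝 0) := by
    simp only [one_div]
    refine tendsto_inv₀_cobounded.comp (tendsto_norm_atTop_iff_cobounded.mp ?_)
    refine tendsto_atTop_mono (fun τ ↦ norm_sub_norm_le _ _) ?_
    exact tendsto_atTop_add_const_right _ _ tendsto_norm_jFunction
  have hd : MDiff fun τ ↦ 1 / (jFunction τ - w) := mdifferentiable_const.div
    (mdifferentiable_jFunction.sub mdifferentiable_const) fun τ ↦ sub_ne_zero.mpr (hw τ)
  obtain ⟨c, hc⟩ := eq_const_of_smul_invariant hd (fun γ τ ↦ by rw [jFunction_smul])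
    (hlim.isBigO_one ℝ)
  have hc0 : c = 0 := tendsto_nhds_unique (hc ▸ tendsto_const_nhds) hlim
  exact one_div_ne_zero (sub_ne_zero.mpr (hw I)) ((congrFun hc I).trans hc0)

/-! ### The ring of holomorphic functions of moderate growth at the cusps -/

lemma isBoundedAtImInfty_qParam_pow (k : ℕ) :
    IsBoundedAtImInfty fun τ : ℍ ↦ Periodic.qParam 1 (τ : ℂ) ^ k :=
  ((qParam_tendsto_atImInfty one_pos).pow k).isBigO_one ℝ

/-- Holomorphic functions `f` on `ℍ` with at most exponential growth at `i∞`, in the form that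
`q ^ k * f` is bounded there for some `k`. -/
def moderateAtImInfty : Subalgebra ℂ (ℍ → ℂ) where
  carrier := {f | MDiff f ∧
    ∃ k : ℕ, IsBoundedAtImInfty fun τ ↦ Periodic.qParam 1 (τ : ℂ) ^ k * f τ}
  mul_mem' := by
    rintro f g ⟨hf, k, hk⟩ ⟨hg, l, hl⟩
    refine ⟨hf.mul hg, k + l, (hk.mul hl).congr_left fun τ ↦ ?_⟩
    simp only [Pi.mul_apply]
    ring
  add_mem' := by
    rintro f g ⟨hf, k, hk⟩ ⟨hg, l, hl⟩
    refine ⟨hf.add hg, k + l, (((isBoundedAtImInfty_qParam_pow l).mul hk).add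
      ((isBoundedAtImInfty_qParam_pow k).mul hl)).congr_left fun τ ↦ ?_⟩
    simp only [Pi.mul_apply, Pi.add_apply]
    ring
  algebraMap_mem' c := ⟨mdifferentiable_const, 0, by
    simpa only [pow_zero, one_mul] using! const_boundedAtFilter atImInfty c⟩

/-- The ring of holomorphic functions on `ℍ` of moderate growth at all cusps of `SL(2, ℤ)`.
It contains all the functions `τ ↦ j(gτ)` and is stable under `SL(2, ℤ)`. -/
def moderateAtCusps : Subalgebra ℂ (ℍ → ℂ) where
  carrier := {f | ∀ γ : SL(2, ℤ), (fun τ ↦ f (γ • τ)) ∈ moderateAtImInfty}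
  mul_mem' hf hg γ := mul_mem (hf γ) (hg γ)
  add_mem' hf hg γ := add_mem (hf γ) (hg γ)
  algebraMap_mem' c _ := moderateAtImInfty.algebraMap_mem c

namespace moderateAtCusps

instance : CoeFun moderateAtCusps fun _ ↦ ℍ → ℂ := ⟨Subtype.val⟩

lemma mdifferentiable (f : moderateAtCusps) : MDiff (f : ℍ → ℂ) := by
  simpa using (f.2 1).1

lemma continuous (f : moderateAtCusps) : Continuous f :=
  (mdifferentiable f).continuous

/-- Evaluation of functions at a point of `ℍ`. -/
def evalAt (τ : ℍ) : moderateAtCusps →ₐ[ℂ] ℂ :=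
  (Pi.evalAlgHom ℂ (fun _ ↦ ℂ) τ).comp moderateAtCusps.val

lemma evalAt_apply (τ : ℍ) (f : moderateAtCusps) : evalAt τ f = f τ := rfl

lemma ext_evalAt {f g : moderateAtCusps} (h : ∀ τ, evalAt τ f = evalAt τ g) : f = g :=
  Subtype.ext (funext h)

instance : MulSemiringAction SL(2, ℤ) moderateAtCusps where
  smul γ f := ⟨fun τ ↦ f (γ⁻¹ • τ), fun δ ↦ by simpa only [smul_smul] using f.2 (γ⁻¹ * δ)⟩
  one_smul f := Subtype.ext <| funext fun τ ↦ congrArg f (by simp)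
  mul_smul γ δ f := Subtype.ext <| funext fun τ ↦ congrArg f (by
    rw [_root_.mul_inv_rev, mul_smul])
  smul_zero _ := rfl
  smul_add _ _ _ := rfl
  smul_one _ := rfl
  smul_mul _ _ _ := rfl

lemma smul_apply (γ : SL(2, ℤ)) (f : moderateAtCusps) (τ : ℍ) : (γ • f) τ = f (γ⁻¹ • τ) := rfl

instance : NoZeroDivisors moderateAtCusps where
  eq_zero_or_eq_zero_of_mul_eq_zero {f g} h :=
    ((UpperHalfPlane.mul_eq_zero_iff (mdifferentiable f) (mdifferentiable g)).mp
      (congrArg Subtype.val h)).imp (fun h ↦ Subtype.ext h) fun h ↦ Subtype.ext h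

instance : IsDomain moderateAtCusps := NoZeroDivisors.to_isDomain _

/-- The modular `j`-function as an element of the ring. -/
def jFun : moderateAtCusps :=
  ⟨jFunction, fun γ ↦ by
    simp only [jFunction_smul]
    exact ⟨mdifferentiable_jFunction, 1, by
      simpa only [pow_one] using! tendsto_qParam_mul_jFunction.isBigO_one ℝ⟩⟩

lemma jFun_apply (τ : ℍ) : jFun τ = jFunction τ := rfl

lemma smul_jFun (γ : SL(2, ℤ)) : γ • jFun = jFun :=
  Subtype.ext <| funext fun τ ↦ jFunction_smul γ⁻¹ τ

/-- The substitution `X ↦ j`, from polynomials in one variable to modular functions. -/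
def evalJ : ℂ[X] →+* moderateAtCusps := (aeval jFun).toRingHom

lemma evalAt_evalJ (τ : ℍ) (G : ℂ[X]) : evalAt τ (evalJ G) = G.eval (jFunction τ) := by
  rw [← coe_aeval_eq_eval, ← jFun_apply τ, ← evalAt_apply, aeval_algHom_apply]
  rfl

lemma evalJ_injective : Injective evalJ := fun F G h ↦ by
  refine Polynomial.funext fun z ↦ ?_
  obtain ⟨τ, rfl⟩ := jFunction_surjective z
  rw [← evalAt_evalJ, h, evalAt_evalJ]

end moderateAtCusps

/-! ### Invariant functions are polynomials in `j` -/

lemma mdifferentiable_qParam : MDiff fun τ : ℍ ↦ Periodic.qParam 1 (τ : ℂ) := by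
  rw [UpperHalfPlane.mdifferentiable_iff]
  refine (Periodic.differentiable_qParam (h := 1)).differentiableOn.congr fun z hz ↦ ?_
  simp [ofComplex_apply_of_im_pos hz]

lemma qParam_vadd (τ : ℍ) :
    Periodic.qParam 1 (((1 : ℝ) +ᵥ τ : ℍ) : ℂ) = Periodic.qParam 1 (τ : ℂ) := by
  simp only [coe_vadd, Periodic.qParam, Complex.ofReal_one, div_one, mul_add, mul_one,
    Complex.exp_add, Complex.exp_two_pi_mul_I, one_mul]

lemma vadd_eq_of_smul_invariant {α : Type*} {h : ℍ → α}
    (hinv : ∀ (γ : SL(2, ℤ)) τ, h (γ • τ) = h τ) (τ : ℍ) : h ((1 : ℝ) +ᵥ τ) = h τ := by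
  rw [← modular_T_smul, hinv]

lemma exists_isBoundedAtImInfty_sub_mul_jFunction_pow {h : ℍ → ℂ} {k : ℕ} (hd : MDiff h)
    (hinv : ∀ (γ : SL(2, ℤ)) τ, h (γ • τ) = h τ)
    (hb : IsBoundedAtImInfty fun τ ↦ Periodic.qParam 1 (τ : ℂ) ^ (k + 1) * h τ) :
    ∃ c, IsBoundedAtImInfty fun τ ↦
      Periodic.qParam 1 (τ : ℂ) ^ k * (h τ - c * jFunction τ ^ (k + 1)) := by
  have mdiff {f : ℍ → ℂ} (hf : MDiff f) :
      MDiff fun τ : ℍ ↦ Periodic.qParam 1 (τ : ℂ) ^ (k + 1) * f τ :=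
    (mdifferentiable_qParam.pow (k + 1)).mul hf
  have vadd {f : ℍ → ℂ} (hf : ∀ (γ : SL(2, ℤ)) τ, f (γ • τ) = f τ) (τ : ℍ) :
      Periodic.qParam 1 (((1 : ℝ) +ᵥ τ : ℍ) : ℂ) ^ (k + 1) * f ((1 : ℝ) +ᵥ τ) =
        Periodic.qParam 1 (τ : ℂ) ^ (k + 1) * f τ := by
    rw [qParam_vadd, vadd_eq_of_smul_invariant hf]
  -- The leading coefficient of `h` at the cusp; that of `j ^ (k + 1)` is `1`.
  set c := valueAtInfty fun τ ↦ Periodic.qParam 1 (τ : ℂ) ^ (k + 1) * h τ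
  let v : ℍ → ℂ := fun τ ↦
    Periodic.qParam 1 (τ : ℂ) ^ (k + 1) * (h τ - c * jFunction τ ^ (k + 1))
  have hv0 : Tendsto v atImInfty (𝓝 0) := by
    have := (tendsto_valueAtInfty (vadd hinv) (mdiff hd) hb).sub
      ((tendsto_qParam_mul_jFunction.pow (k + 1)).const_mul c)
    rw [one_pow, mul_one, sub_self] at this
    exact this.congr fun τ ↦ by simp only [v]; ring
  have hvO : v =O[atImInfty] fun τ : ℍ ↦ Periodic.qParam 1 (τ : ℂ) := by
    simpa [IsZeroAtImInfty.valueAtInfty_eq_zero hv0] using isBigO_qParam_sub_valueAtInfty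
      (f := v) (vadd (f := fun τ ↦ h τ - c * jFunction τ ^ (k + 1)) fun γ τ ↦ by
        simp only [hinv, jFunction_smul])
      (mdiff (hd.sub (mdifferentiable_const.mul (mdifferentiable_jFunction.pow (k + 1)))))
      (hv0.isBigO_one ℝ)
  have hq (τ : ℍ) : Periodic.qParam 1 (τ : ℂ) ≠ 0 := Periodic.qParam_ne_zero _
  refine ⟨c, ((hvO.mul (isBigO_refl (fun τ : ℍ ↦ (Periodic.qParam 1 (τ : ℂ))⁻¹) _)).congr
    (fun τ ↦ ?_) fun τ ↦ mul_inv_cancel₀ (hq τ)).trans (isBigO_of_le _ fun τ ↦ by simp)⟩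
  simp only [v, pow_succ]
  field_simp [hq τ]

lemma exists_polynomial_of_smul_invariant {h : ℍ → ℂ} (hm : h ∈ moderateAtImInfty)
    (hinv : ∀ (γ : SL(2, ℤ)) τ, h (γ • τ) = h τ) :
    ∃ G : ℂ[X], ∀ τ, h τ = G.eval (jFunction τ) := by
  obtain ⟨hd, k, hb⟩ := hm
  induction k generalizing h with
  | zero =>
    obtain ⟨c, rfl⟩ := eq_const_of_smul_invariant hd hinv (by simpa using hb)
    exact ⟨C c, by simp⟩
  | succ k ih =>
    obtain ⟨c, hc⟩ := exists_isBoundedAtImInfty_sub_mul_jFunction_pow hd hinv hb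
    obtain ⟨G, hG⟩ := ih (h := fun τ ↦ h τ - c * jFunction τ ^ (k + 1))
      (fun γ τ ↦ by simp only [hinv, jFunction_smul])
      (hd.sub (mdifferentiable_const.mul (mdifferentiable_jFunction.pow (k + 1)))) hc
    exact ⟨G + C c * X ^ (k + 1), fun τ ↦ by simp [← hG τ]⟩

lemma moderateAtCusps.exists_evalJ_eq {f : moderateAtCusps}
    (hf : ∀ γ : SL(2, ℤ), γ • f = f) : ∃ G : ℂ[X], evalJ G = f := by
  obtain ⟨G, hG⟩ := exists_polynomial_of_smul_invariant (h := f) (by simpa using f.2 1)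
    fun γ τ ↦ by simpa [smul_apply] using congrArg (fun f : moderateAtCusps ↦ f τ) (hf γ⁻¹)
  exact ⟨G, ext_evalAt fun τ ↦ by rw [evalAt_evalJ, evalAt_apply, hG]⟩

/-! ### Finite orbits and polynomial relations with `j` -/

section OrbitPolynomial

open MulAction

variable {G A B σ : Type*} [Group G]

/-- The monic polynomial `∏ (X - b)` over the distinct elements `b` of a finite orbit. -/
def orbitPoly [CommRing A] [MulSemiringAction G A] {a : A} (ha : (orbit G a).Finite) : A[X] :=
  ∏ b ∈ ha.toFinset, (X - C b)

lemma monic_orbitPoly [CommRing A] [MulSemiringAction G A] {a : A} (ha : (orbit G a).Finite) :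
    (orbitPoly ha).Monic :=
  monic_prod_X_sub_C _ _

lemma smul_orbitPoly [CommRing A] [MulSemiringAction G A] {a : A} (ha : (orbit G a).Finite)
    (g : G) : g • orbitPoly ha = orbitPoly ha := by
  simp only [orbitPoly, Finset.smul_prod', smul_sub, smul_X, smul_C]
  refine Finset.prod_nbij (g • ·) (fun b hb ↦ ?_) (MulAction.injective g).injOn (fun b hb ↦ ?_)
    fun _ _ ↦ rfl
  · simpa using mem_orbit_of_mem_orbit g (ha.mem_toFinset.mp hb)
  · exact ⟨g⁻¹ • b, by simpa using mem_orbit_of_mem_orbit g⁻¹ (ha.mem_toFinset.mp hb),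
      smul_inv_smul g b⟩

lemma finite_orbit_aeval [Finite σ] [CommSemiring B] [CommSemiring A] [Algebra B A]
    [MulSemiringAction G A] [SMulCommClass G B A] {f : σ → A} (hf : ∀ i, (orbit G (f i)).Finite)
    (h : MvPolynomial σ B) : (orbit G (MvPolynomial.aeval f h)).Finite := by
  refine ((Set.Finite.pi' hf).image fun f' ↦ MvPolynomial.aeval f' h).subset ?_
  rintro _ ⟨g, rfl⟩
  exact ⟨fun i ↦ g • f i, fun i ↦ ⟨g, rfl⟩,
    (MvPolynomial.comp_aeval_apply f (MulSemiringAction.toAlgHom B A g) h).symm⟩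

end OrbitPolynomial

namespace moderateAtCusps

instance : SMulCommClass SL(2, ℤ) ℂ moderateAtCusps := ⟨fun _ _ _ ↦ rfl⟩

section OrbitRelation

variable {f : moderateAtCusps} (hf : (MulAction.orbit SL(2, ℤ) f).Finite)

lemma exists_map_evalJ_eq_orbitPoly :
    ∃ F : ℂ[X][X], F.map evalJ = orbitPoly hf ∧ F.Monic := by
  obtain ⟨F, hF, -, hmonic⟩ := lifts_and_natDegree_eq_and_monic (p := orbitPoly hf)
    (f := evalJ)
    ((lifts_iff_coeff_lifts _).mpr fun _ ↦ exists_evalJ_eq fun γ ↦ by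
      rw [← coeff_smul, smul_orbitPoly]) (monic_orbitPoly hf)
  exact ⟨F, hF, hmonic⟩

/-- The monic polynomial `F(X, Y)` such that `F(j, Y)` is the product of `Y - f'` over the
`SL(2, ℤ)`-orbit of `f`. As an element of `ℂ[X][X]`, its inner variable stands for `j`. -/
def orbitRelation : ℂ[X][X] := (exists_map_evalJ_eq_orbitPoly hf).choose

lemma map_orbitRelation :
    (orbitRelation hf).map evalJ = orbitPoly hf :=
  (exists_map_evalJ_eq_orbitPoly hf).choose_spec.1

lemma monic_orbitRelation : (orbitRelation hf).Monic :=
  (exists_map_evalJ_eq_orbitPoly hf).choose_spec.2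

lemma map_evalRingHom_eq_map_evalAt (F : ℂ[X][X]) (τ : ℍ) :
    F.map (evalRingHom (jFunction τ)) =
      (F.map evalJ).map (evalAt τ : moderateAtCusps →+* ℂ) := by
  rw [Polynomial.map_map]
  congr 1
  exact RingHom.ext fun G ↦ (evalAt_evalJ τ G).symm

lemma evalEval_orbitRelation_eq_zero_iff (τ : ℍ) (w : ℂ) :
    (orbitRelation hf).evalEval (jFunction τ) w = 0 ↔ ∃ γ : SL(2, ℤ), f (γ • τ) = w := by
  rw [← map_evalRingHom_eval, map_evalRingHom_eq_map_evalAt, map_orbitRelation, orbitPoly,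
    Polynomial.map_prod, eval_prod, Finset.prod_eq_zero_iff]
  simp only [Set.Finite.mem_toFinset, MulAction.mem_orbit_iff, exists_exists_eq_and]
  refine (Equiv.inv SL(2, ℤ)).exists_congr fun γ ↦ ?_
  rw [Polynomial.map_sub, map_X, map_C, eval_sub, eval_X, eval_C, sub_eq_zero, eq_comm]
  rfl

include hf in
lemma finite_image_jFunction_setOf_apply_eq_zero (h0 : f ≠ 0) :
    (jFunction '' {τ | f τ = 0}).Finite := by
  -- Up to sign, the constant coefficient is the norm of `f`, which lies in `ℂ[j]`.
  have hnorm : (orbitRelation hf).coeff 0 ≠ 0 := fun h ↦ by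
    have hprod : (orbitPoly hf).coeff 0 = 0 := by
      rw [← map_orbitRelation, coeff_map, h, map_zero]
    rw [coeff_zero_eq_eval_zero, orbitPoly, eval_prod, Finset.prod_eq_zero_iff] at hprod
    obtain ⟨b, hb, hb0⟩ := hprod
    obtain ⟨γ, rfl⟩ := hf.mem_toFinset.mp hb
    simp only [eval_sub, eval_X, eval_C, zero_sub, neg_eq_zero] at hb0
    exact h0 ((smul_eq_zero_iff_eq γ).mp hb0)
  refine (Polynomial.finite_setOfPred_isRoot hnorm).subset ?_
  rintro _ ⟨τ, hτ, rfl⟩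
  change eval (jFunction τ) ((orbitRelation hf).coeff 0) = 0
  rw [coeff_zero_eq_eval_zero, ← C_0]
  exact (evalEval_orbitRelation_eq_zero_iff hf τ 0).mpr ⟨1, by rwa [one_smul]⟩

end OrbitRelation

end moderateAtCusps

/-! ### Curves parametrised by `j` and functions with finite orbits -/

lemma exists_eval_eq_zero_and_eval_ne_zero {σ K : Type*} [Field K] {s : Set (σ → K)}
    (hs : s.Finite) {v : σ → K} (hv : v ∉ s) :
    ∃ p : MvPolynomial σ K, (∀ w ∈ s, MvPolynomial.eval w p = 0) ∧ MvPolynomial.eval v p ≠ 0 := by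
  have hne (w : s) : ∃ i, v i ≠ (w : σ → K) i :=
    Function.ne_iff.mp fun h ↦ hv (h ▸ w.2)
  choose i hi using hne
  have := hs.fintype
  refine ⟨∏ w : s, (MvPolynomial.X (i w) - MvPolynomial.C ((w : σ → K) (i w))), fun w hw ↦ ?_, ?_⟩
  · rw [map_prod]
    exact Finset.prod_eq_zero (Finset.mem_univ ⟨w, hw⟩) (by simp)
  · simpa [map_prod, Finset.prod_eq_zero_iff, sub_eq_zero] using fun w hw ↦ hi ⟨w, hw⟩

lemma eval_aevalAeval {σ K : Type*} [CommSemiring K] (v : σ → K) (p q : MvPolynomial σ K)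
    (F : K[X][X]) : MvPolynomial.eval v (aevalAeval p q F) =
      F.evalEval (MvPolynomial.eval v p) (MvPolynomial.eval v q) := by
  rw [← coe_aevalAeval_eq_evalEval, ← MvPolynomial.coe_aeval_eq_eval]
  refine DFunLike.congr_fun (f := (MvPolynomial.aeval v).comp (aevalAeval p q)) ?_ F
  ext <;> simp

namespace moderateAtCusps

lemma finite_range_smul {f : moderateAtCusps} (hf : (MulAction.orbit SL(2, ℤ) f).Finite) (τ : ℍ) :
    (Set.range fun γ : SL(2, ℤ) ↦ f (γ • τ)).Finite := by
  refine (hf.image fun f' ↦ f' τ).subset ?_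
  rintro _ ⟨γ, rfl⟩
  exact ⟨γ⁻¹ • f, ⟨γ⁻¹, rfl⟩, by simp only [smul_apply, inv_inv]⟩

section Tuple

variable {n : ℕ} {f : Fin n → moderateAtCusps}

lemma eval_coe_eq_evalAt_aeval (τ : ℍ) (p : MvPolynomial (Fin n) ℂ) :
    MvPolynomial.eval (fun i ↦ f i τ) p = evalAt τ (MvPolynomial.aeval f p) := by
  rw [MvPolynomial.comp_aeval_apply, ← MvPolynomial.coe_aeval_eq_eval]
  rfl

variable (hf : ∀ i, (MulAction.orbit SL(2, ℤ) (f i)).Finite) {i₀ : Fin n} (hi₀ : f i₀ = jFun)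

include hi₀ in
lemma mem_range_iff_forall_evalEval_orbitRelation (v : Fin n → ℂ) :
    v ∈ Set.range (fun τ i ↦ f i τ) ↔ ∀ p : MvPolynomial (Fin n) ℂ,
      (orbitRelation (finite_orbit_aeval hf p)).evalEval (v i₀) (MvPolynomial.eval v p) = 0 := by
  constructor
  · rintro ⟨τ, rfl⟩ p
    simp only [hi₀, jFun_apply]
    rw [evalEval_orbitRelation_eq_zero_iff]
    exact ⟨1, by rw [one_smul, ← evalAt_apply, eval_coe_eq_evalAt_aeval]⟩
  · intro hv
    obtain ⟨τ, hτ⟩ := jFunction_surjective (v i₀)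
    have hfin : (Set.range fun (γ : SL(2, ℤ)) i ↦ f i (γ • τ)).Finite :=
      (Set.Finite.pi' fun i ↦ finite_range_smul (hf i) τ).subset <| by
        rintro _ ⟨γ, rfl⟩ i
        exact ⟨γ, rfl⟩
    by_contra hv'
    -- A polynomial `p` separating `v` from the finitely many points of the range above `v i₀`.
    obtain ⟨p, hp, hpv⟩ := exists_eval_eq_zero_and_eval_ne_zero hfin (v := v) <| by
      rintro ⟨γ, rfl⟩
      exact hv' ⟨γ • τ, rfl⟩
    have hvp := hv p
    rw [← hτ, evalEval_orbitRelation_eq_zero_iff] at hvp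
    obtain ⟨γ, hγ⟩ := hvp
    refine hpv ?_
    rw [← hγ, ← evalAt_apply, ← eval_coe_eq_evalAt_aeval]
    exact hp _ ⟨γ, rfl⟩

include hf hi₀ in
lemma isAlgebraicSet_range : IsAlgebraicSet (Set.range fun τ i ↦ f i τ) := by
  refine ⟨Set.range fun p ↦
    aevalAeval (MvPolynomial.X i₀) p (orbitRelation (finite_orbit_aeval hf p)), ?_⟩
  ext v
  simp only [mem_range_iff_forall_evalEval_orbitRelation hf hi₀, Set.mem_ofPred_eq,
    Set.forall_mem_range, eval_aevalAeval, MvPolynomial.eval_X]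

include hf hi₀ in
lemma finite_setOf_mem_range_and_apply_eq (z : ℂ) :
    {v ∈ Set.range (fun τ i ↦ f i τ) | v i₀ = z}.Finite := by
  obtain ⟨τ, rfl⟩ := jFunction_surjective z
  refine (Set.Finite.pi' fun i ↦ finite_range_smul (hf i) τ).subset ?_
  rintro _ ⟨⟨τ', rfl⟩, hτ'⟩ i
  simp only [hi₀, jFun_apply] at hτ'
  rw [Set.mem_range, ← evalEval_orbitRelation_eq_zero_iff (hf i), ← hτ',
    evalEval_orbitRelation_eq_zero_iff (hf i)]
  exact ⟨1, by rw [one_smul]⟩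

lemma range_subset_or_subset {A B : Set (Fin n → ℂ)} (hA : IsAlgebraicSet A)
    (hB : IsAlgebraicSet B) (h : Set.range (fun τ i ↦ f i τ) ⊆ A ∪ B) :
    Set.range (fun τ i ↦ f i τ) ⊆ A ∨ Set.range (fun τ i ↦ f i τ) ⊆ B := by
  obtain ⟨ps, rfl⟩ := hA
  obtain ⟨qs, rfl⟩ := hB
  by_contra! hnot
  simp only [Set.range_subset_iff, Set.mem_ofPred_eq, eval_coe_eq_evalAt_aeval] at hnot
  push Not at hnot
  obtain ⟨⟨τ, p, hp, hpτ⟩, τ', q, hq, hqτ'⟩ := hnot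
  have hpq : MvPolynomial.aeval f p * MvPolynomial.aeval f q = 0 := ext_evalAt fun τ ↦ by
    rw [map_mul, map_zero, ← eval_coe_eq_evalAt_aeval, ← eval_coe_eq_evalAt_aeval]
    rcases h ⟨τ, rfl⟩ with hτ | hτ
    · rw [hτ p hp, zero_mul]
    · rw [hτ q hq, mul_zero]
  rcases mul_eq_zero.mp hpq with h0 | h0
  · exact hpτ (by rw [h0, map_zero])
  · exact hqτ' (by rw [h0, map_zero])

include hf hi₀ in
lemma range_subset_of_infinite_image {V : Set (Fin n → ℂ)} (hV : IsAlgebraicSet V)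
    (hsub : V ⊆ Set.range fun τ i ↦ f i τ) (hinf : ((fun v ↦ v i₀) '' V).Infinite) :
    Set.range (fun τ i ↦ f i τ) ⊆ V := by
  obtain ⟨ps, rfl⟩ := hV
  suffices h : ∀ p ∈ ps, MvPolynomial.aeval f p = 0 by
    rintro _ ⟨τ, rfl⟩ p hp
    rw [eval_coe_eq_evalAt_aeval, h p hp, map_zero]
  intro p hp
  by_contra h0
  refine hinf ((finite_image_jFunction_setOf_apply_eq_zero (finite_orbit_aeval hf p) h0).subset ?_)
  rintro _ ⟨v, hv, rfl⟩
  obtain ⟨τ, rfl⟩ := hsub hv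
  refine ⟨τ, ?_, by simp only [hi₀, jFun_apply]⟩
  have hpτ := hv p hp
  rwa [eval_coe_eq_evalAt_aeval] at hpτ

end Tuple

end moderateAtCusps

/-! ### Primitive integral matrices -/

lemma exists_isCoprime_add_mul {a b d : ℤ} (hd : d ≠ 0) (h : IsCoprime b (Int.gcd a d)) :
    ∃ x, IsCoprime (b + a * x) d := by
  have : NeZero d.natAbs := ⟨Int.natAbs_ne_zero.mpr hd⟩
  have hdvd : Int.gcd a d ∣ d.natAbs := Int.gcd_dvd_natAbs_right a d
  obtain ⟨u, hu⟩ := ZMod.unitsMap_surjective hdvd (ZMod.unitOfIsCoprime b h)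
  obtain ⟨w, hw⟩ := ZMod.intCast_surjective (u : ZMod d.natAbs)
  have hwd : IsCoprime w d := by
    have hunit := (ZMod.coe_int_isUnit_iff_isCoprime w d.natAbs).mp (hw ▸ u.isUnit)
    rwa [isCoprime_comm, Int.natCast_natAbs, IsCoprime.abs_right_iff] at hunit
  obtain ⟨k, hk⟩ : (Int.gcd a d : ℤ) ∣ w - b := by
    have hwb := congrArg Units.val hu
    rw [ZMod.unitsMap_val, ← hw, ZMod.cast_intCast hdvd] at hwb
    exact (ZMod.intCast_eq_intCast_iff_dvd_sub _ _ _).mp (by simpa using hwb.symm)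
  refine ⟨a.gcdA d * k, ?_⟩
  have hsum : b + a * (a.gcdA d * k) = w + d * (-(a.gcdB d * k)) := by
    rw [Int.gcd_eq_gcd_ab a d] at hk
    linear_combination -hk
  rw [hsum]
  exact hwd.add_mul_left_left _

lemma dvd_gcd_entries_iff {A : Matrix (Fin 2) (Fin 2) ℤ} {r : ℤ} :
    r ∣ Int.gcd (Int.gcd (A 0 0) (A 0 1)) (Int.gcd (A 1 0) (A 1 1)) ↔ ∀ i j, r ∣ A i j := by
  simp only [Int.dvd_coe_gcd_iff, Fin.forall_fin_two]

lemma isPrimitiveIntMatrix_iff {A : Matrix (Fin 2) (Fin 2) ℤ} :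
    IsPrimitiveIntMatrix A ↔ ∀ r : ℤ, (∀ i j, r ∣ A i j) → IsUnit r := by
  simp only [← dvd_gcd_entries_iff, IsPrimitiveIntMatrix]
  refine ⟨fun h r hr ↦ isUnit_of_dvd_one (by simpa [h] using hr), fun h ↦ ?_⟩
  simpa [Int.isUnit_iff_natAbs_eq] using h _ dvd_rfl

lemma IsPrimitiveIntMatrix.sl2Z_mul {A : Matrix (Fin 2) (Fin 2) ℤ} (hA : IsPrimitiveIntMatrix A)
    (γ : SL(2, ℤ)) : IsPrimitiveIntMatrix (γ.1 * A) := by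
  rw [isPrimitiveIntMatrix_iff] at hA ⊢
  refine fun r hr ↦ hA r fun i j ↦ ?_
  have h : A = γ.1.adjugate * (γ.1 * A) := by
    rw [← Matrix.mul_assoc, Matrix.adjugate_mul, γ.2, one_smul, Matrix.one_mul]
  rw [h, Matrix.mul_apply]
  exact Finset.dvd_sum fun k _ ↦ (hr k j).mul_left _

lemma exists_eq_smul_isPrimitiveIntMatrix {B : Matrix (Fin 2) (Fin 2) ℤ} (hB : B ≠ 0) :
    ∃ (e : ℤ) (A : Matrix (Fin 2) (Fin 2) ℤ), IsPrimitiveIntMatrix A ∧ B = e • A := by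
  set e : ℤ := (Int.gcd (Int.gcd (B 0 0) (B 0 1)) (Int.gcd (B 1 0) (B 1 1)) : ℤ) with he
  choose A hA using dvd_gcd_entries_iff.mp (dvd_of_eq he)
  have hBA : B = e • Matrix.of A := Matrix.ext hA
  have he0 : e ≠ 0 := fun h ↦ hB (by rw [hBA, h, zero_smul])
  refine ⟨e, Matrix.of A, isPrimitiveIntMatrix_iff.mpr fun r hr ↦ ?_, hBA⟩
  have hre : e * r ∣ e := dvd_gcd_entries_iff.mpr fun i j ↦ by
    rw [hA i j]
    exact mul_dvd_mul_left e (hr i j)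
  exact isUnit_of_dvd_one ((mul_dvd_mul_iff_left he0).mp (by rwa [mul_one]))

lemma exists_sl2Z_mul_upperTriangular_mul_eq {a b d : ℤ} (hd : d ≠ 0)
    (h : IsPrimitiveIntMatrix !![a, b; 0, d]) :
    ∃ γ₁ γ₂ γ₃ : SL(2, ℤ), γ₁.1 * !![a, b; 0, d] * γ₂.1 = !![a * d, 0; 0, 1] * γ₃.1 := by
  have hb : IsCoprime b (Int.gcd a d) := by
    refine isCoprime_of_dvd _ _ (fun h0 ↦ hd (Int.gcd_eq_zero_iff.mp (by simpa using h0.2)).2)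
      fun r hr _ hrb hre ↦ hr (isPrimitiveIntMatrix_iff.mp h r ?_)
    simpa [Fin.forall_fin_two, hrb] using Int.dvd_coe_gcd_iff.mp hre
  obtain ⟨x, s, t, hst⟩ := exists_isCoprime_add_mul hd hb
  refine ⟨⟨!![d, -(b + a * x); s, t], ?_⟩, ⟨!![1, x; 0, 1], ?_⟩, ⟨!![1, 0; s * a, 1], ?_⟩, ?_⟩
  · rw [Matrix.det_fin_two_of]
    linarith
  · simp [Matrix.det_fin_two_of]
  · simp [Matrix.det_fin_two_of]
  · simp only [Matrix.mul_fin_two]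
    ext i j
    fin_cases i <;> fin_cases j <;> simp <;> linarith

lemma exists_sl2Z_smul_mem_reps {m : ℤ} (hm : m ≠ 0) (A : FixedDetMatrix (Fin 2) ℤ m) :
    ∃ γ : SL(2, ℤ), γ • A ∈ FixedDetMatrices.reps m := by
  induction A using FixedDetMatrices.induction_on hm with
  | h0 A h10 h00 h01 h11 => exact ⟨1, by rw [one_smul]; exact ⟨h10, h00, h01, h11⟩⟩
  | hS B hB =>
    obtain ⟨γ, hγ⟩ := hB
    exact ⟨γ * ModularGroup.S⁻¹, by rwa [SemigroupAction.mul_smul, inv_smul_smul]⟩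
  | hT B hB =>
    obtain ⟨γ, hγ⟩ := hB
    exact ⟨γ * ModularGroup.T⁻¹, by rwa [SemigroupAction.mul_smul, inv_smul_smul]⟩

lemma exists_sl2Z_mul_mul_eq_diagonal_mul {A : Matrix (Fin 2) (Fin 2) ℤ}
    (hA : IsPrimitiveIntMatrix A) (hdet : A.det ≠ 0) :
    ∃ γ₁ γ₂ γ₃ : SL(2, ℤ), γ₁.1 * A * γ₂.1 = !![A.det, 0; 0, 1] * γ₃.1 := by
  obtain ⟨γ, hγ, -⟩ := exists_sl2Z_smul_mem_reps hdet ⟨A, rfl⟩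
  change (γ.1 * A) 1 0 = 0 at hγ
  obtain ⟨a, b, d, hγA⟩ : ∃ a b d, γ.1 * A = !![a, b; 0, d] :=
    ⟨_, _, _, by rw [← hγ]; exact Matrix.eta_fin_two _⟩
  have had : A.det = a * d := by
    rw [← one_mul A.det, ← γ.2, ← Matrix.det_mul, hγA, Matrix.det_fin_two_of]
    ring
  obtain ⟨γ₁, γ₂, γ₃, h⟩ := exists_sl2Z_mul_upperTriangular_mul_eq
    (right_ne_zero_of_mul (had ▸ hdet)) (hγA ▸ hA.sl2Z_mul γ)
  refine ⟨γ₁ * γ, γ₂, γ₃, ?_⟩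
  rw [had, ← h, ← hγA, ← Matrix.mul_assoc]
  rfl

/-! ### The action of `G` on the upper half plane -/

lemma GL2QPos_ext {g h : GL2QPos}
    (H : ((g : GL (Fin 2) ℚ) : Matrix (Fin 2) (Fin 2) ℚ) = (h : GL (Fin 2) ℚ)) : g = h :=
  Subtype.ext (Units.ext H)

lemma coe_GL2QPos_mul (g h : GL2QPos) :
    (((g * h : GL2QPos) : GL (Fin 2) ℚ) : Matrix (Fin 2) (Fin 2) ℚ) =
      ((g : GL (Fin 2) ℚ) : Matrix (Fin 2) (Fin 2) ℚ) * ((h : GL (Fin 2) ℚ)) := rfl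

/-- An integral matrix of positive determinant as an element of `GL₂⁺(ℚ)`. -/
def GL2QPos.ofInt (A : Matrix (Fin 2) (Fin 2) ℤ) (hA : 0 < A.det) : GL2QPos :=
  have hdet : 0 < (A.map (Int.castRingHom ℚ)).det := by
    rw [← RingHom.mapMatrix_apply, ← RingHom.map_det]
    exact Int.cast_pos.mpr hA
  ⟨GeneralLinearGroup.mkOfDetNeZero (A.map (Int.castRingHom ℚ)) hdet.ne', hdet⟩

lemma GL2QPos.coe_ofInt (A : Matrix (Fin 2) (Fin 2) ℤ) (hA : 0 < A.det) :
    ((ofInt A hA : GL (Fin 2) ℚ) : Matrix (Fin 2) (Fin 2) ℚ) = A.map (Int.castRingHom ℚ) := rfl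

/-- The class in `G` of an integral matrix of positive determinant. -/
def GQ.ofInt (A : Matrix (Fin 2) (Fin 2) ℤ) (hA : 0 < A.det) : GQ :=
  QuotientGroup.mk (GL2QPos.ofInt A hA)

lemma GQ.ofInt_mul {A B : Matrix (Fin 2) (Fin 2) ℤ} (hA : 0 < A.det) (hB : 0 < B.det) :
    ofInt A hA * ofInt B hB = ofInt (A * B) (by rw [Matrix.det_mul]; positivity) := by
  rw [ofInt, ofInt, ← QuotientGroup.mk_mul, ofInt]
  congr 1
  apply GL2QPos_ext
  simp only [coe_GL2QPos_mul, GL2QPos.coe_ofInt]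
  exact (Matrix.map_mul (f := Int.castRingHom ℚ)).symm

lemma sl2ZtoGQ_eq (γ : SL(2, ℤ)) : sl2ZtoGQ γ = GQ.ofInt γ.1 (by rw [γ.2]; exact one_pos) :=
  congrArg QuotientGroup.mk (GL2QPos_ext rfl)

lemma mem_center_iff_exists_eq_smul_one {z : GL2QPos} :
    z ∈ Subgroup.center GL2QPos ↔
      ∃ c : ℚ, ((z : GL (Fin 2) ℚ) : Matrix (Fin 2) (Fin 2) ℚ) = c • 1 := by
  rw [Subgroup.mem_center_iff]
  refine ⟨fun hz ↦ ?_, fun ⟨c, hc⟩ g ↦ GL2QPos_ext ?_⟩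
  · have hU := congrArg (fun g : GL2QPos ↦ ((g : GL (Fin 2) ℚ) : Matrix (Fin 2) (Fin 2) ℚ))
      (hz (GL2QPos.ofInt !![1, 1; 0, 1] (by simp)))
    have hL := congrArg (fun g : GL2QPos ↦ ((g : GL (Fin 2) ℚ) : Matrix (Fin 2) (Fin 2) ℚ))
      (hz (GL2QPos.ofInt !![1, 0; 1, 1] (by simp)))
    simp only [coe_GL2QPos_mul, GL2QPos.coe_ofInt] at hU hL
    set M := ((z : GL (Fin 2) ℚ) : Matrix (Fin 2) (Fin 2) ℚ)
    have h10 : M 1 0 = 0 := by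
      simpa [Matrix.mul_apply, Fin.sum_univ_two] using congrFun₂ hU 0 0
    have h11 : M 0 1 + M 1 1 = M 0 0 + M 0 1 := by
      simpa [Matrix.mul_apply, Fin.sum_univ_two] using congrFun₂ hU 0 1
    rw [add_comm, add_left_inj] at h11
    have h01 : M 0 1 = 0 := by
      simpa [Matrix.mul_apply, Fin.sum_univ_two] using congrFun₂ hL 0 0
    refine ⟨M 0 0, ?_⟩
    ext i j
    fin_cases i <;> fin_cases j <;> simp [h10, h11, h01]
  · simp [hc]

lemma mk_eq_mk_iff_exists_eq_smul {x y : GL2QPos} :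
    (QuotientGroup.mk x : GQ) = QuotientGroup.mk y ↔
      ∃ c : ℚ, ((x : GL (Fin 2) ℚ) : Matrix (Fin 2) (Fin 2) ℚ) =
        c • ((y : GL (Fin 2) ℚ) : Matrix (Fin 2) (Fin 2) ℚ) := by
  rw [eq_comm, QuotientGroup.eq, mem_center_iff_exists_eq_smul_one]
  refine exists_congr fun c ↦ ⟨fun h ↦ ?_, fun h ↦ ?_⟩
  · rw [← mul_inv_cancel_left y x, coe_GL2QPos_mul y, h, Matrix.mul_smul, mul_one]
  · rw [coe_GL2QPos_mul, h, Matrix.mul_smul, ← coe_GL2QPos_mul, inv_mul_cancel]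
    rfl

lemma coe_toGLPosR_smul (g : GL2QPos) (τ : ℍ) :
    ((toGLPosR g • τ : ℍ) : ℂ) =
      ((((g : GL (Fin 2) ℚ) 0 0 : ℚ) : ℂ) * τ + (((g : GL (Fin 2) ℚ) 0 1 : ℚ) : ℂ)) /
      ((((g : GL (Fin 2) ℚ) 1 0 : ℚ) : ℂ) * τ + (((g : GL (Fin 2) ℚ) 1 1 : ℚ) : ℂ)) := by
  refine (UpperHalfPlane.coe_smul_of_det_pos (toGLPosR g).2 τ).trans ?_
  have hentry (i j : Fin 2) :
      (toGLPosR g : GL (Fin 2) ℝ) i j = (((g : GL (Fin 2) ℚ) i j : ℚ) : ℝ) := rfl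
  simp only [num, denom, hentry, Complex.ofReal_ratCast]

lemma toGLPosR_smul_eq_of_mem_center {z : GL2QPos} (hz : z ∈ Subgroup.center GL2QPos) (τ : ℍ) :
    toGLPosR z • τ = τ := by
  obtain ⟨c, hc⟩ := mem_center_iff_exists_eq_smul_one.mp hz
  have hc0 : (c : ℂ) ≠ 0 := by
    rintro h0
    have hdet := z.2
    rw [Matrix.mem_glpos, Matrix.GeneralLinearGroup.val_det_apply, hc] at hdet
    simp_all
  ext
  rw [coe_toGLPosR_smul, hc]
  simp [hc0]

lemma gqSmul_mk (g : GL2QPos) (τ : ℍ) : gqSmul (QuotientGroup.mk g) τ = toGLPosR g • τ := by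
  obtain ⟨z, hz⟩ := QuotientGroup.mk_out_eq_mul (Subgroup.center GL2QPos) g
  rw [gqSmul, hz, map_mul, SemigroupAction.mul_smul, toGLPosR_smul_eq_of_mem_center z.2]

lemma gqSmul_mul (g h : GQ) (τ : ℍ) : gqSmul (g * h) τ = gqSmul g (gqSmul h τ) := by
  induction g using QuotientGroup.induction_on with | _ g
  induction h using QuotientGroup.induction_on with | _ h
  rw [← QuotientGroup.mk_mul, gqSmul_mk, gqSmul_mk, gqSmul_mk, map_mul, SemigroupAction.mul_smul]

lemma gqSmul_one (τ : ℍ) : gqSmul 1 τ = τ := by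
  rw [← QuotientGroup.mk_one, gqSmul_mk, map_one, one_smul]

lemma gqSmul_surjective (g : GQ) : Surjective (gqSmul g) := fun τ ↦
  ⟨gqSmul g⁻¹ τ, by rw [← gqSmul_mul, mul_inv_cancel, gqSmul_one]⟩

lemma coe_gqSmul_ofInt {A : Matrix (Fin 2) (Fin 2) ℤ} (hA : 0 < A.det) (τ : ℍ) :
    ((gqSmul (GQ.ofInt A hA) τ : ℍ) : ℂ) = (A 0 0 * τ + A 0 1) / (A 1 0 * τ + A 1 1) := by
  rw [GQ.ofInt, gqSmul_mk, coe_toGLPosR_smul, GL2QPos.coe_ofInt]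
  simp only [map_apply, eq_intCast, Rat.cast_intCast]

lemma gqSmul_sl2ZtoGQ (γ : SL(2, ℤ)) (τ : ℍ) : gqSmul (sl2ZtoGQ γ) τ = γ • τ := by
  ext
  rw [sl2ZtoGQ_eq, coe_gqSmul_ofInt, UpperHalfPlane.coe_specialLinearGroup_apply]
  simp

lemma mdifferentiable_gqSmul (g : GQ) : MDiff (gqSmul g) :=
  UpperHalfPlane.mdifferentiable_smul (toGLPosR g.out).2

lemma GQ.ofInt_mem_GQdet {A : Matrix (Fin 2) (Fin 2) ℤ} (hA : 0 < A.det)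
    (hp : IsPrimitiveIntMatrix A) {N : ℕ} (hN : A.det = N) : ofInt A hA ∈ GQdet N :=
  ⟨A, hp, hN, mk_eq_mk_iff_exists_eq_smul.mp (QuotientGroup.out_eq' _)⟩

lemma exists_eq_ofInt_of_mem_GQdet {g : GQ} {N : ℕ} (hN : 0 < N) (hg : g ∈ GQdet N) :
    ∃ (A : Matrix (Fin 2) (Fin 2) ℤ) (hA : 0 < A.det), IsPrimitiveIntMatrix A ∧ A.det = N ∧
      g = GQ.ofInt A hA := by
  obtain ⟨A, hp, hdet, hc⟩ := hg
  refine ⟨A, hdet ▸ Int.natCast_pos.mpr hN, hp, hdet, ?_⟩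
  rw [← QuotientGroup.out_eq' g]
  exact mk_eq_mk_iff_exists_eq_smul.mpr hc

lemma exists_isPrimitiveIntMatrix_eq_ofInt (g : GQ) :
    ∃ (A : Matrix (Fin 2) (Fin 2) ℤ) (hA : 0 < A.det), IsPrimitiveIntMatrix A ∧
      g = GQ.ofInt A hA := by
  induction g using QuotientGroup.induction_on with | _ x
  set M := ((x : GL (Fin 2) ℚ) : Matrix (Fin 2) (Fin 2) ℚ)
  have hMdet : 0 < M.det := x.2
  have hM0 : M ≠ 0 := by
    rintro h0
    simp [h0] at hMdet
  obtain ⟨e, A, hA, hMA⟩ := exists_eq_smul_isPrimitiveIntMatrix ((num_eq_zero_iff M).not.mpr hM0)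
  have hMA' : M = ((M.den : ℚ)⁻¹ * e) • A.map (Int.castRingHom ℚ) := by
    refine (inv_denom_smul_num M).symm.trans ?_
    rw [hMA, SemigroupAction.mul_smul]
    congr 1
    ext i j
    simp only [map_apply, Matrix.smul_apply, smul_eq_mul, Int.cast_mul, eq_intCast]
  have hdet : 0 < A.det := by
    rw [hMA', Matrix.det_smul, Fintype.card_fin, ← RingHom.mapMatrix_apply, ← RingHom.map_det]
      at hMdet
    exact Int.cast_pos.mp (pos_of_mul_pos_right hMdet (sq_nonneg _))
  exact ⟨A, hdet, hA, mk_eq_mk_iff_exists_eq_smul.mpr ⟨_, hMA'⟩⟩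

lemma exists_mem_GQdet (g : GQ) : ∃ N : ℕ, 0 < N ∧ g ∈ GQdet N := by
  obtain ⟨A, hA, hp, rfl⟩ := exists_isPrimitiveIntMatrix_eq_ofInt g
  obtain ⟨N, hN⟩ := Int.eq_ofNat_of_zero_le hA.le
  exact ⟨N, by omega, GQ.ofInt_mem_GQdet hA hp hN⟩

/-! ### Hecke translates of `j` -/

section UpperTriangular

variable {A : Matrix (Fin 2) (Fin 2) ℤ} (hA : 0 < A.det)

lemma im_gqSmul_ofInt_of_upperTriangular (h10 : A 1 0 = 0) (τ : ℍ) :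
    (gqSmul (GQ.ofInt A hA) τ).im = A 0 0 / A 1 1 * τ.im := by
  rw [← coe_im, coe_gqSmul_ofInt, h10, Int.cast_zero, zero_mul, zero_add,
    ← Complex.ofReal_intCast, ← Complex.ofReal_intCast, ← Complex.ofReal_intCast,
    Complex.div_ofReal_im]
  simp only [Complex.add_im, Complex.im_ofReal_mul, Complex.ofReal_im, coe_im, add_zero]
  ring

include hA in
lemma apply_one_one_pos_of_upperTriangular (h10 : A 1 0 = 0) (h00 : 0 < A 0 0) : 0 < A 1 1 := by
  rw [Matrix.det_fin_two, h10, mul_zero, sub_zero] at hA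
  exact pos_of_mul_pos_right hA h00.le

lemma tendsto_gqSmul_ofInt_atImInfty (h10 : A 1 0 = 0) (h00 : 0 < A 0 0) :
    Tendsto (gqSmul (GQ.ofInt A hA)) atImInfty atImInfty := by
  have h00' : (0 : ℝ) < A 0 0 := Int.cast_pos.mpr h00
  have h11' : (0 : ℝ) < A 1 1 :=
    Int.cast_pos.mpr (apply_one_one_pos_of_upperTriangular hA h10 h00)
  refine tendsto_comap_iff.mpr (Tendsto.congr (fun τ ↦ ?_)
    (tendsto_comap.const_mul_atTop (div_pos h00' h11')))
  exact (im_gqSmul_ofInt_of_upperTriangular hA h10 τ).symm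

lemma norm_qParam_pow_le_norm_qParam_gqSmul (h10 : A 1 0 = 0) (h00 : 0 < A 0 0) (τ : ℍ) :
    ‖Periodic.qParam 1 (τ : ℂ) ^ (A 0 0).toNat‖ ≤
      ‖Periodic.qParam 1 (gqSmul (GQ.ofInt A hA) τ : ℂ)‖ := by
  have h11 : (1 : ℝ) ≤ A 1 1 :=
    Int.cast_one_le_of_pos (apply_one_one_pos_of_upperTriangular hA h10 h00)
  have h00' : (0 : ℝ) ≤ A 0 0 := Int.cast_nonneg h00.le
  have htoNat : ((A 0 0).toNat : ℝ) = A 0 0 := by exact_mod_cast Int.toNat_of_nonneg h00.le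
  rw [norm_pow, Periodic.norm_qParam, Periodic.norm_qParam, ← Real.exp_nat_mul, coe_im, coe_im,
    im_gqSmul_ofInt_of_upperTriangular hA h10, htoNat, Real.exp_le_exp]
  have hle : A 0 0 / A 1 1 * τ.im ≤ A 0 0 * τ.im :=
    mul_le_mul_of_nonneg_right (div_le_self h00' h11) τ.im_pos.le
  nlinarith [Real.pi_pos]

lemma jFunction_gqSmul_ofInt_mem_moderateAtImInfty (h10 : A 1 0 = 0) (h00 : 0 < A 0 0) :
    (fun τ ↦ jFunction (gqSmul (GQ.ofInt A hA) τ)) ∈ moderateAtImInfty := by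
  refine ⟨mdifferentiable_jFunction.comp (mdifferentiable_gqSmul _), (A 0 0).toNat,
    IsBigO.trans (isBigO_of_le _ fun τ ↦ ?_)
      ((tendsto_qParam_mul_jFunction.comp
        (tendsto_gqSmul_ofInt_atImInfty hA h10 h00)).isBigO_one ℝ)⟩
  rw [Function.comp_apply, norm_mul, norm_mul]
  gcongr
  exact norm_qParam_pow_le_norm_qParam_gqSmul hA h10 h00 τ

end UpperTriangular

lemma jFunction_gqSmul_sl2ZtoGQ_mul (γ : SL(2, ℤ)) (g : GQ) (τ : ℍ) :
    jFunction (gqSmul (sl2ZtoGQ γ * g) τ) = jFunction (gqSmul g τ) := by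
  rw [gqSmul_mul, gqSmul_sl2ZtoGQ, jFunction_smul]

lemma exists_mem_reps_jFunction_gqSmul_ofInt_eq {A : Matrix (Fin 2) (Fin 2) ℤ} {m : ℤ}
    (hm : 0 < m) (hA : A.det = m) :
    ∃ B : FixedDetMatrices.reps m, ∀ τ : ℍ, jFunction (gqSmul (GQ.ofInt A (hA ▸ hm)) τ) =
      jFunction (gqSmul (GQ.ofInt B.1.1 (by rw [B.1.2]; exact hm)) τ) := by
  obtain ⟨γ, hγ⟩ := exists_sl2Z_smul_mem_reps hm.ne' ⟨A, hA⟩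
  refine ⟨⟨_, hγ⟩, fun τ ↦ ?_⟩
  rw [← jFunction_gqSmul_sl2ZtoGQ_mul γ, sl2ZtoGQ_eq, GQ.ofInt_mul]
  rfl

lemma jFunction_gqSmul_mem_moderateAtImInfty (g : GQ) :
    (fun τ ↦ jFunction (gqSmul g τ)) ∈ moderateAtImInfty := by
  obtain ⟨A, hA, -, rfl⟩ := exists_isPrimitiveIntMatrix_eq_ofInt g
  obtain ⟨⟨B, h10, h00, _⟩, hB⟩ := exists_mem_reps_jFunction_gqSmul_ofInt_eq hA rfl
  rw [funext hB]
  exact jFunction_gqSmul_ofInt_mem_moderateAtImInfty _ h10 h00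

/-- The Hecke translate `τ ↦ j(gτ)` of the `j`-function. -/
def heckeFun (g : GQ) : moderateAtCusps :=
  ⟨fun τ ↦ jFunction (gqSmul g τ), fun γ ↦ by
    simpa only [gqSmul_mul, gqSmul_sl2ZtoGQ] using
      jFunction_gqSmul_mem_moderateAtImInfty (g * sl2ZtoGQ γ)⟩

lemma heckeFun_apply (g : GQ) (τ : ℍ) : heckeFun g τ = jFunction (gqSmul g τ) := rfl

lemma heckeFun_one : heckeFun 1 = moderateAtCusps.jFun :=
  Subtype.ext <| funext fun τ ↦ congrArg jFunction (gqSmul_one τ)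

lemma heckeFun_sl2ZtoGQ_mul (γ : SL(2, ℤ)) (g : GQ) : heckeFun (sl2ZtoGQ γ * g) = heckeFun g :=
  Subtype.ext <| funext <| jFunction_gqSmul_sl2ZtoGQ_mul γ g

lemma smul_heckeFun (γ : SL(2, ℤ)) (g : GQ) :
    γ • heckeFun g = heckeFun (g * sl2ZtoGQ γ⁻¹) :=
  Subtype.ext <| funext fun τ ↦ by
    rw [moderateAtCusps.smul_apply, heckeFun_apply, heckeFun_apply, gqSmul_mul, gqSmul_sl2ZtoGQ]

lemma heckeFun_surjective (g : GQ) : Surjective (heckeFun g) :=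
  jFunction_surjective.comp (gqSmul_surjective g)

lemma finite_orbit_heckeFun (g : GQ) : (MulAction.orbit SL(2, ℤ) (heckeFun g)).Finite := by
  obtain ⟨A, hA, -, rfl⟩ := exists_isPrimitiveIntMatrix_eq_ofInt g
  refine (Set.finite_range fun B : FixedDetMatrices.reps A.det ↦
    heckeFun (GQ.ofInt B.1.1 (by rw [B.1.2]; exact hA))).subset ?_
  rintro _ ⟨γ, rfl⟩
  have hdet : (A * γ⁻¹.1).det = A.det := by rw [Matrix.det_mul, γ⁻¹.2, mul_one]
  obtain ⟨B, hB⟩ := exists_mem_reps_jFunction_gqSmul_ofInt_eq hA hdet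
  refine ⟨B, ?_⟩
  simp only [smul_heckeFun, sl2ZtoGQ_eq, GQ.ofInt_mul]
  exact Subtype.ext (funext hB).symm

/-- The class of the diagonal matrix with entries `N, 1`. -/
def diagGQ {N : ℕ} (hN : 0 < N) : GQ :=
  GQ.ofInt !![(N : ℤ), 0; 0, 1] (by simpa [Matrix.det_fin_two_of] using hN)

lemma diagGQ_mem_GQdet {N : ℕ} (hN : 0 < N) : diagGQ hN ∈ GQdet N :=
  GQ.ofInt_mem_GQdet _ (by simp [IsPrimitiveIntMatrix]) (by simp [Matrix.det_fin_two_of])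

lemma coe_gqSmul_diagGQ {N : ℕ} (hN : 0 < N) (τ : ℍ) :
    ((gqSmul (diagGQ hN) τ : ℍ) : ℂ) = N * τ := by
  rw [diagGQ, coe_gqSmul_ofInt]
  simp

lemma heckeFun_mem_orbit_diagGQ {N : ℕ} (hN : 0 < N) {g : GQ} (hg : g ∈ GQdet N) :
    heckeFun g ∈ MulAction.orbit SL(2, ℤ) (heckeFun (diagGQ hN)) := by
  obtain ⟨A, hA, hp, hdet, rfl⟩ := exists_eq_ofInt_of_mem_GQdet hN hg
  obtain ⟨γ₁, γ₂, γ₃, h⟩ := exists_sl2Z_mul_mul_eq_diagonal_mul hp hA.ne'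
  have hsmul : γ₂⁻¹ • heckeFun (GQ.ofInt A hA) = γ₃⁻¹ • heckeFun (diagGQ hN) := by
    rw [smul_heckeFun, smul_heckeFun, inv_inv, inv_inv, ← heckeFun_sl2ZtoGQ_mul γ₁, ← mul_assoc]
    simp only [sl2ZtoGQ_eq, diagGQ, GQ.ofInt_mul, h, hdet]
  refine MulAction.mem_orbit_iff.mpr ⟨γ₂ * γ₃⁻¹, ?_⟩
  rw [SemigroupAction.mul_smul, ← hsmul, smul_inv_smul]

/-! ### Algebraic sets and descent of the base field -/

section AlgebraicSet

variable {n : ℕ}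

lemma isAlgebraicSet_empty : IsAlgebraicSet (∅ : Set (Fin n → ℂ)) :=
  ⟨{1}, by ext; simp⟩

lemma IsAlgebraicSet.union {V W : Set (Fin n → ℂ)} (hV : IsAlgebraicSet V)
    (hW : IsAlgebraicSet W) : IsAlgebraicSet (V ∪ W) := by
  obtain ⟨ps, rfl⟩ := hV
  obtain ⟨qs, rfl⟩ := hW
  refine ⟨Set.image2 (· * ·) ps qs, Set.ext fun v ↦ ?_⟩
  simp only [Set.mem_union, Set.mem_ofPred_eq, Set.forall_mem_image2, map_mul, mul_eq_zero]
  grind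

lemma isAlgebraicSet_sUnion {𝒲 : Set (Set (Fin n → ℂ))} (hfin : 𝒲.Finite)
    (halg : ∀ W ∈ 𝒲, IsAlgebraicSet W) : IsAlgebraicSet (⋃₀ 𝒲) := by
  induction 𝒲, hfin using Set.Finite.induction_on with
  | empty => simpa using isAlgebraicSet_empty
  | insert _ _ ih =>
    rw [Set.sUnion_insert]
    rw [Set.forall_mem_insert] at halg
    exact halg.1.union (ih halg.2)

lemma IsIrreducibleAlgSet.exists_subset_of_subset_sUnion {V : Set (Fin n → ℂ)}
    (hV : IsIrreducibleAlgSet V) {𝒲 : Set (Set (Fin n → ℂ))} (hfin : 𝒲.Finite)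
    (halg : ∀ W ∈ 𝒲, IsAlgebraicSet W) (hsub : V ⊆ ⋃₀ 𝒲) : ∃ W ∈ 𝒲, V ⊆ W := by
  induction 𝒲, hfin using Set.Finite.induction_on with
  | empty =>
    rw [Set.sUnion_empty] at hsub
    exact absurd (Set.subset_eq_empty hsub rfl) hV.2.1.ne_empty
  | @insert W 𝒲 _ hfin ih =>
    rw [Set.forall_mem_insert] at halg
    rw [Set.sUnion_insert] at hsub
    rw [Set.exists_mem_insert]
    exact (hV.2.2 _ _ halg.1 (isAlgebraicSet_sUnion hfin halg.2) hsub).imp_right (ih halg.2)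

end AlgebraicSet

lemma exists_eq_sum_basis_smul {ι R A M N : Type*} [CommSemiring R] [Semiring A] [Algebra R A]
    [AddCommMonoid M] [Module A M] [Module R M] [IsScalarTower R A M] [AddCommMonoid N]
    [Module R N] (b : Module.Basis ι R A) (f : N →ₗ[R] M)
    (hf : Submodule.span A (Set.range f) = ⊤) (m : M) :
    ∃ c : ι →₀ N, m = c.sum fun i x ↦ b i • f x := by
  have hm : m ∈ Submodule.span A (Set.range f) := hf ▸ Submodule.mem_top
  induction hm using Submodule.closure_induction with
  | zero => exact ⟨0, Finsupp.sum_zero_index.symm⟩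
  | add m₁ m₂ _ _ h₁ h₂ =>
    obtain ⟨c₁, rfl⟩ := h₁
    obtain ⟨c₂, rfl⟩ := h₂
    exact ⟨c₁ + c₂, (Finsupp.sum_add_index' (by simp) (by simp)).symm⟩
  | smul_mem a m hm =>
    obtain ⟨x, rfl⟩ := hm
    refine ⟨(b.repr a).mapRange (· • x) (zero_smul R x), ?_⟩
    conv_lhs => rw [← b.linearCombination_repr a, Finsupp.linearCombination_apply]
    rw [Finsupp.sum_mapRange_index (by simp), Finsupp.sum, Finset.sum_smul]
    exact Finset.sum_congr rfl fun i _ ↦ by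
      rw [smul_assoc, smul_comm]
      exact congrArg (b i • ·) (f.map_smul _ x).symm

lemma exists_eq_sum_basis_smul_map {ι σ R A : Type*} [CommSemiring R] [CommSemiring A]
    [Algebra R A] (b : Module.Basis ι R A) (p : MvPolynomial σ A) :
    ∃ c : ι →₀ MvPolynomial σ R,
      p = c.sum fun i q ↦ b i • MvPolynomial.map (algebraMap R A) q := by
  refine exists_eq_sum_basis_smul b (MvPolynomial.mapAlgHom (Algebra.ofId R A)).toLinearMap
    (eq_top_iff.mpr fun p _ ↦ ?_) p
  induction p using MvPolynomial.induction_on' with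
  | monomial m a =>
    have hsmul : MvPolynomial.monomial m a =
        a • MvPolynomial.mapAlgHom (Algebra.ofId R A) (MvPolynomial.monomial m 1) := by
      simp [MvPolynomial.smul_monomial]
    rw [hsmul]
    exact Submodule.smul_mem _ _ (Submodule.subset_span ⟨_, rfl⟩)
  | add p q hp hq => exact add_mem (hp trivial) (hq trivial)

lemma eval_eq_zero_of_eval_sum_basis_smul_map_eq_zero {ι σ R A : Type*} [CommRing R]
    [CommRing A] [Algebra R A] (b : Module.Basis ι R A) {c : ι →₀ MvPolynomial σ R} {v : σ → R}
    (h : MvPolynomial.eval (algebraMap R A ∘ v)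
      (c.sum fun i q ↦ b i • MvPolynomial.map (algebraMap R A) q) = 0) (i : ι) :
    MvPolynomial.eval v (c i) = 0 := by
  have hc : c.mapRange (MvPolynomial.eval v) (map_zero _) = 0 := by
    refine linearIndependent_iff.mp b.linearIndependent _ ?_
    rw [← h, Finsupp.linearCombination_apply, Finsupp.sum_mapRange_index (by simp), Finsupp.sum,
      Finsupp.sum, map_sum]
    exact Finset.sum_congr rfl fun i _ ↦ by
      rw [MvPolynomial.smul_eval, ← MvPolynomial.map_eval, Algebra.smul_def, mul_comm]
  simpa using DFunLike.congr_fun hc i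

lemma isAlgebraicSetOver_of_subset_closure {n : ℕ} {k : Subfield ℂ} {V D : Set (Fin n → ℂ)}
    (hV : IsAlgebraicSet V) (hDV : D ⊆ V) (hVD : V ⊆ closure D) (hD : ∀ v ∈ D, ∀ i, v i ∈ k) :
    IsAlgebraicSetOver k V := by
  obtain ⟨ps, rfl⟩ := hV
  let b := Module.Basis.ofVectorSpace k ℂ
  have hvanish {p : MvPolynomial (Fin n) ℂ} (hp : ∀ v ∈ D, MvPolynomial.eval v p = 0) :
      ∀ v ∈ closure D, MvPolynomial.eval v p = 0 := fun v hv ↦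
    closure_minimal hp (isClosed_eq p.continuous_eval continuous_const) hv
  refine ⟨{q | (∀ m, q.coeff m ∈ k) ∧ ∀ v ∈ D, MvPolynomial.eval v q = 0}, fun q hq ↦ hq.1,
    Set.Subset.antisymm (fun v hv q hq ↦ hvanish hq.2 v (hVD hv)) fun v hv p hp ↦ ?_⟩
  obtain ⟨c, rfl⟩ := exists_eq_sum_basis_smul_map b p
  have hc (i) : MvPolynomial.map (algebraMap k ℂ) (c i) ∈
      {q | (∀ m, q.coeff m ∈ k) ∧ ∀ v ∈ D, MvPolynomial.eval v q = 0} := by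
    refine ⟨fun m ↦ by rw [MvPolynomial.coeff_map]; exact SetLike.coe_mem _, fun w hw ↦ ?_⟩
    obtain ⟨w, rfl⟩ : ∃ w' : Fin n → k, algebraMap k ℂ ∘ w' = w :=
      ⟨fun i ↦ ⟨w i, hD w hw i⟩, rfl⟩
    rw [← MvPolynomial.map_eval,
      eval_eq_zero_of_eval_sum_basis_smul_map_eq_zero b (hDV hw _ hp), map_zero]
  rw [Finsupp.sum, map_sum]
  refine Finset.sum_eq_zero fun i _ ↦ ?_
  rw [MvPolynomial.smul_eval, hv _ (hc i), mul_zero]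

/-! ### The Hecke image -/

section HeckeImage

variable {n : ℕ}

lemma heckeImage_eq_range (g : Fin n → GQ) :
    heckeImage g = Set.range fun τ i ↦ heckeFun (g i) τ := rfl

lemma heckeImage_mul_right (g : Fin n → GQ) (h : GQ) :
    heckeImage (fun i ↦ g i * h) = heckeImage g := by
  simp only [heckeImage, gqSmul_mul]
  exact (gqSmul_surjective h).range_comp fun τ i ↦ jFunction (gqSmul (g i) τ)

lemma exists_heckeImage_eq_range (g : Fin n → GQ) (i₀ : Fin n) :
    ∃ f : Fin n → moderateAtCusps, (∀ i, (MulAction.orbit SL(2, ℤ) (f i)).Finite) ∧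
      f i₀ = moderateAtCusps.jFun ∧ heckeImage g = Set.range fun τ i ↦ f i τ :=
  ⟨fun i ↦ heckeFun (g i * (g i₀)⁻¹), fun _ ↦ finite_orbit_heckeFun _,
    (congrArg heckeFun (mul_inv_cancel _)).trans heckeFun_one,
    (heckeImage_mul_right g (g i₀)⁻¹).symm⟩

lemma isAlgebraicSet_heckeImage (hn : 0 < n) (g : Fin n → GQ) : IsAlgebraicSet (heckeImage g) := by
  obtain ⟨f, hf, hi₀, hg⟩ := exists_heckeImage_eq_range g ⟨0, hn⟩
  exact hg ▸ moderateAtCusps.isAlgebraicSet_range hf hi₀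

lemma isIrreducibleAlgSet_heckeImage (hn : 0 < n) (g : Fin n → GQ) :
    IsIrreducibleAlgSet (heckeImage g) :=
  ⟨isAlgebraicSet_heckeImage hn g, Set.range_nonempty _,
    fun _ _ ↦ moderateAtCusps.range_subset_or_subset (f := fun i ↦ heckeFun (g i))⟩

lemma image_eval_heckeImage (g : Fin n → GQ) (i : Fin n) :
    (fun v ↦ v i) '' heckeImage g = Set.univ := by
  rw [heckeImage_eq_range, ← Set.range_comp]
  exact (heckeFun_surjective (g i)).range_eq

lemma finite_setOf_mem_heckeImage_and_apply_eq (g : Fin n → GQ) (i : Fin n) (z : ℂ) :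
    {v ∈ heckeImage g | v i = z}.Finite := by
  obtain ⟨f, hf, hi, hg⟩ := exists_heckeImage_eq_range g i
  exact hg ▸ moderateAtCusps.finite_setOf_mem_range_and_apply_eq hf hi z

lemma isAlgebraicCurve_heckeImage (hn : 0 < n) (g : Fin n → GQ) :
    IsAlgebraicCurve (heckeImage g) := by
  refine ⟨isAlgebraicSet_heckeImage hn g, Set.Infinite.of_image (fun v ↦ v ⟨0, hn⟩) ?_, ⟨0, hn⟩,
    finite_setOf_mem_heckeImage_and_apply_eq g _⟩
  rw [image_eval_heckeImage]
  exact Set.infinite_univ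

lemma not_exists_forall_heckeImage_apply_eq (g : Fin n → GQ) (i : Fin n) :
    ¬ ∃ c : ℂ, ∀ v ∈ heckeImage g, v i = c := by
  rintro ⟨c, hc⟩
  obtain ⟨v, hv, hvi⟩ := (image_eval_heckeImage g i).ge (Set.mem_univ (c + 1))
  exact absurd (hvi.symm.trans (hc v hv)) (by simp)

lemma heckeImage_eq_of_subset (hn : 0 < n) {g g' : Fin n → GQ}
    (h : heckeImage g ⊆ heckeImage g') : heckeImage g = heckeImage g' := by
  refine h.antisymm ?_
  obtain ⟨f, hf, hi₀, hg'⟩ := exists_heckeImage_eq_range g' ⟨0, hn⟩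
  rw [hg'] at h ⊢
  refine moderateAtCusps.range_subset_of_infinite_image hf hi₀ (isAlgebraicSet_heckeImage hn g) h ?_
  rw [image_eval_heckeImage]
  exact Set.infinite_univ

/-! ### Special points -/

lemma IsSpecial.gqSmul {τ : ℍ} (h : IsSpecial τ) (g : GQ) : IsSpecial (gqSmul g τ) := by
  obtain ⟨x, hx, hτ⟩ := h
  refine ⟨g * x * g⁻¹, by simpa using hx, ?_⟩
  rw [← gqSmul_mul, inv_mul_cancel_right, gqSmul_mul, hτ]

lemma isSpecial_I : IsSpecial I := by
  refine ⟨GQ.ofInt !![0, -1; 1, 0] (by simp), fun h ↦ ?_, ?_⟩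
  · obtain ⟨c, hc⟩ := mem_center_iff_exists_eq_smul_one.mp ((QuotientGroup.eq_one_iff _).mp h)
    simpa [GL2QPos.coe_ofInt] using congrFun (congrFun hc 1) 0
  · ext
    rw [coe_gqSmul_ofInt]
    simp

lemma exists_isSpecial_coe_eq (x : ℚ) {y : ℚ} (hy : 0 < y) :
    ∃ τ, IsSpecial τ ∧ (τ : ℂ) = x + y * Complex.I := by
  let A : Matrix (Fin 2) (Fin 2) ℤ := !![y.num * x.den, x.num * y.den; 0, x.den * y.den]
  have hA : 0 < A.det := by
    have : 0 < y.num := Rat.num_pos.mpr hy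
    simp only [A, Matrix.det_fin_two_of, mul_zero, sub_zero]
    positivity
  refine ⟨gqSmul (GQ.ofInt A hA) I, isSpecial_I.gqSmul _, ?_⟩
  have hx0 : (x.den : ℂ) ≠ 0 := mod_cast x.den_pos.ne'
  have hy0 : (y.den : ℂ) ≠ 0 := mod_cast y.den_pos.ne'
  rw [coe_gqSmul_ofInt, Rat.cast_def x, Rat.cast_def y]
  simp only [A, of_apply, cons_val', cons_val_zero, cons_val_one, cons_val_fin_one, coe_I,
    Int.cast_mul, Int.cast_natCast, Int.cast_zero, zero_mul, zero_add]
  field_simp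
  ring

lemma dense_specialSet : Dense SpecialSet := by
  refine dense_iff_inter_open.mpr fun U hU ⟨τ, hτU⟩ ↦ ?_
  let u (p : ℝ × ℝ) : ℂ := p.1 + p.2 * Complex.I
  have hu : Continuous u := by fun_prop
  have hτ : u (τ.re, τ.im) = τ := Complex.re_add_im τ
  have hopen : IsOpen (u ⁻¹' (UpperHalfPlane.coe '' U)) :=
    (isOpenEmbedding_coe.isOpenMap U hU).preimage hu
  obtain ⟨⟨x, y⟩, τ', hτ'U, hxy⟩ := (Rat.denseRange_cast (𝕜 := ℝ) |>.prodMap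
    (Rat.denseRange_cast (𝕜 := ℝ))).exists_mem_open hopen ⟨_, τ, hτU, hτ.symm⟩
  have hy : (0 : ℝ) < y := by
    have him := congrArg Complex.im hxy
    simp only [u, Prod.map_apply, coe_im, Complex.add_im, Complex.ofReal_im, Complex.im_ofReal_mul,
      Complex.I_im, mul_one, zero_add] at him
    exact him ▸ τ'.im_pos
  obtain ⟨σ, hσ, hxy'⟩ := exists_isSpecial_coe_eq x (Rat.cast_pos.mp hy)
  obtain rfl : σ = τ' := UpperHalfPlane.ext (hxy'.trans (by simp [u, hxy]))
  exact ⟨σ, hτ'U, hσ⟩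

lemma heckeFun_mem_jSpecialValues {τ : ℍ} (h : τ ∈ SpecialSet) (g : GQ) :
    heckeFun g τ ∈ jSpecialValues := ⟨_, IsSpecial.gqSmul h g, rfl⟩

lemma infinite_special_heckeImage (hn : 0 < n) (g : Fin n → GQ) :
    {v ∈ heckeImage g | ∀ i, v i ∈ jSpecialValues}.Infinite := by
  have hdense : Dense (heckeFun (g ⟨0, hn⟩) '' SpecialSet) :=
    (heckeFun_surjective _).denseRange.dense_image (moderateAtCusps.continuous _) dense_specialSet
  have hinf : (heckeFun (g ⟨0, hn⟩) '' SpecialSet).Infinite := fun hfin ↦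
    Set.infinite_univ (α := ℂ) (by rwa [← hdense.closure_eq, hfin.isClosed.closure_eq])
  refine Set.Infinite.of_image (fun v ↦ v ⟨0, hn⟩) (hinf.mono ?_)
  rintro _ ⟨τ, hτ, rfl⟩
  exact ⟨_, ⟨⟨τ, rfl⟩, fun i ↦ heckeFun_mem_jSpecialValues hτ (g i)⟩, rfl⟩

lemma isAlgebraicSetOver_heckeImage (hn : 0 < n) (g : Fin n → GQ) :
    IsAlgebraicSetOver QjS (heckeImage g) := by
  refine isAlgebraicSetOver_of_subset_closure (D := (fun τ i ↦ heckeFun (g i) τ) '' SpecialSet)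
    (isAlgebraicSet_heckeImage hn g) (Set.image_subset_range _ _) ?_ ?_
  · exact Continuous.range_subset_closure_image_dense
      (continuous_pi fun i ↦ moderateAtCusps.continuous (heckeFun (g i))) dense_specialSet
  · rintro _ ⟨τ, hτ, rfl⟩ i
    exact Subfield.subset_closure (heckeFun_mem_jSpecialValues hτ (g i))

end HeckeImage

/-! ### Functions with rational `q`-expansions -/

/-- Functions on `ℍ` given by a power series in `q = exp(2πiτ)` with rational coefficients. -/
def ratQExpansion : Subalgebra ℚ (ℍ → ℂ) where
  carrier := {f | ∃ a : ℕ → ℚ, ∀ τ : ℍ,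
    HasSum (fun m ↦ (a m : ℂ) * Periodic.qParam 1 (τ : ℂ) ^ m) (f τ)}
  mul_mem' := by
    rintro f g ⟨a, ha⟩ ⟨b, hb⟩
    refine ⟨fun m ↦ ∑ k ∈ Finset.range (m + 1), a k * b (m - k), fun τ ↦ ?_⟩
    have h := hasSum_sum_range_mul_of_summable_norm (ha τ).summable.norm (hb τ).summable.norm
    rw [(ha τ).tsum_eq, (hb τ).tsum_eq] at h
    refine h.congr_fun fun m ↦ ?_
    push_cast
    rw [Finset.sum_mul]
    refine Finset.sum_congr rfl fun k hk ↦ ?_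
    rw [← Nat.add_sub_of_le (Finset.mem_range_succ_iff.mp hk), Nat.add_sub_cancel_left, pow_add]
    ring
  add_mem' := by
    rintro f g ⟨a, ha⟩ ⟨b, hb⟩
    refine ⟨a + b, fun τ ↦ ?_⟩
    simpa [add_mul] using (ha τ).add (hb τ)
  algebraMap_mem' r := by
    refine ⟨Pi.single 0 r, fun τ ↦ ?_⟩
    convert hasSum_single (f := fun m ↦ ((Pi.single (M := fun _ : ℕ ↦ ℚ) 0 r m : ℚ) : ℂ) *
      Periodic.qParam 1 (τ : ℂ) ^ m) 0 (fun m hm ↦ by simp [hm]) using 1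
    simp

lemma E_mem_ratQExpansion {k : ℕ} (hk : 3 ≤ k) (hk2 : Even k) : ⇑(E hk) ∈ ratQExpansion := by
  refine ⟨fun m ↦ if m = 0 then 1 else
    -(2 * k / _root_.bernoulli k) * ArithmeticFunction.sigma (k - 1) m, fun τ ↦ ?_⟩
  refine (ModularForm.hasSum_qExpansion (E hk) one_pos one_mem_strictPeriods_SL τ).congr_fun
    fun m ↦ ?_
  rw [EisensteinSeries.E_qExpansion_coeff hk hk2 m]
  split_ifs with h0 <;> simp [h0]

lemma comp_diagGQ_mem_ratQExpansion {N : ℕ} (hN : 0 < N) {f : ℍ → ℂ} (hf : f ∈ ratQExpansion) :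
    f ∘ gqSmul (diagGQ hN) ∈ ratQExpansion := by
  obtain ⟨a, ha⟩ := hf
  have hinj : Injective (N * ·) := fun _ _ h ↦ Nat.eq_of_mul_eq_mul_left hN h
  refine ⟨extend (N * ·) a 0, fun τ ↦ ?_⟩
  rw [← hinj.hasSum_iff]
  · refine (ha (gqSmul (diagGQ hN) τ)).congr_fun fun m ↦ ?_
    rw [coe_gqSmul_diagGQ, Function.comp_apply, hinj.extend_apply, pow_mul]
    congr 2
    simp only [Periodic.qParam, ← Complex.exp_nat_mul]
    congr 1
    ring
  · intro m hm
    rw [extend_apply' _ _ _ hm]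
    simp

lemma eq_zero_of_hasSum_zero {c : ℕ → ℂ}
    (h : ∀ τ : ℍ, HasSum (fun m ↦ c m * Periodic.qParam 1 (τ : ℂ) ^ m) 0) (m : ℕ) : c m = 0 := by
  have han : AnalyticAt ℂ (cuspFunction 1 (0 : ModularForm 𝒮ℒ 0)) 0 :=
    ModularFormClass.analyticAt_cuspFunction_zero _ one_pos one_mem_strictPeriods_SL
  rw [UpperHalfPlane.qExpansion_coeff_unique (0 : ModularForm 𝒮ℒ 0) one_pos han (c := c) h m,
    FunLike.coe_zero, qExpansion_zero]
  simp

/-- Quotients of functions with rational `q`-expansions, with nowhere vanishing denominator. -/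
def ratQFraction : Subalgebra ℚ (ℍ → ℂ) where
  carrier := {f | ∃ D ∈ ratQExpansion, (∀ τ, D τ ≠ 0) ∧ D * f ∈ ratQExpansion}
  mul_mem' := by
    rintro f g ⟨D, hD, hD0, hDf⟩ ⟨D', hD', hD'0, hDg⟩
    refine ⟨D * D', mul_mem hD hD', fun τ ↦ mul_ne_zero (hD0 τ) (hD'0 τ), ?_⟩
    rw [mul_mul_mul_comm]
    exact mul_mem hDf hDg
  add_mem' := by
    rintro f g ⟨D, hD, hD0, hDf⟩ ⟨D', hD', hD'0, hDg⟩
    refine ⟨D * D', mul_mem hD hD', fun τ ↦ mul_ne_zero (hD0 τ) (hD'0 τ), ?_⟩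
    rw [show D * D' * (f + g) = D' * (D * f) + D * (D' * g) by ring]
    exact add_mem (mul_mem hD' hDf) (mul_mem hD hDg)
  algebraMap_mem' r :=
    ⟨1, one_mem _, fun _ ↦ one_ne_zero, by rw [one_mul]; exact ratQExpansion.algebraMap_mem r⟩

section LinearIndependence

variable {ι : Type*} {v : ι → ℂ} {s : Finset ι} {x : ι → ℍ → ℂ}

lemma eq_zero_of_sum_smul_eq_zero_of_mem_ratQExpansion (hv : LinearIndependent ℚ v)
    (hx : ∀ i ∈ s, x i ∈ ratQExpansion) (h : ∑ i ∈ s, v i • x i = 0) :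
    ∀ i ∈ s, x i = 0 := by
  choose! a ha using hx
  have hsum (m : ℕ) : ∑ i ∈ s, a i m • v i = 0 := by
    refine eq_zero_of_hasSum_zero (c := fun m ↦ ∑ i ∈ s, a i m • v i) (fun τ ↦ ?_) m
    rw [← Pi.zero_apply (M := fun _ : ℍ ↦ ℂ) τ, ← h, Finset.sum_apply]
    simp only [Finset.sum_mul]
    refine hasSum_sum fun i hi ↦ ((ha i hi τ).mul_left (v i)).congr_fun fun m ↦ ?_
    rw [Rat.smul_def]
    ring
  intro i hi
  ext τ
  refine (ha i hi τ).unique (hasSum_zero.congr_fun fun m ↦ ?_)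
  rw [linearIndependent_iff'.mp hv s _ (hsum m) i hi, Rat.cast_zero, zero_mul]

lemma eq_zero_of_sum_smul_eq_zero_of_mem_ratQFraction (hv : LinearIndependent ℚ v)
    (hx : ∀ i ∈ s, x i ∈ ratQFraction) (h : ∑ i ∈ s, v i • x i = 0) :
    ∀ i ∈ s, x i = 0 := by
  choose! D hD hD0 hDx using hx
  have hprod : ∀ i ∈ s, (∏ k ∈ s, D k) * x i = (∏ k ∈ s.erase i, D k) * (D i * x i) :=
    fun i hi ↦ by rw [← Finset.prod_erase_mul s D hi, mul_assoc]
  have hzero := eq_zero_of_sum_smul_eq_zero_of_mem_ratQExpansion hv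
    (x := fun i ↦ (∏ k ∈ s, D k) * x i) (fun i hi ↦ by
      rw [hprod i hi]
      exact mul_mem (prod_mem fun k hk ↦ hD k (Finset.mem_of_mem_erase hk)) (hDx i hi))
    (by simp only [← mul_smul_comm, ← Finset.mul_sum, h, mul_zero])
  intro i hi
  ext τ
  refine (mul_eq_zero.mp (congrFun (hzero i hi) τ)).resolve_left ?_
  rw [Finset.prod_apply]
  exact Finset.prod_ne_zero_iff.mpr fun k hk ↦ hD0 k hk τ

end LinearIndependence

lemma jFunction_mem_ratQFraction : jFunction ∈ ratQFraction := by
  have h4 : ⇑E₄ ∈ ratQExpansion := E_mem_ratQExpansion _ (by decide)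
  have h6 : ⇑E₆ ∈ ratQExpansion := E_mem_ratQExpansion _ (by decide)
  have hdisc (τ : ℍ) : E₄ τ ^ 3 - E₆ τ ^ 2 = 1728 * ModularForm.discriminant τ := by
    rw [discriminant_eq_E₄_cube_sub_E₆_sq]
    ring
  refine ⟨⇑E₄ ^ 3 - ⇑E₆ ^ 2, sub_mem (pow_mem h4 3) (pow_mem h6 2), fun τ ↦ ?_, ?_⟩
  · exact (hdisc τ).trans_ne
      (mul_ne_zero (by norm_num) (ModularForm.discriminant_ne_zero τ))
  · have hj : (⇑E₄ ^ 3 - ⇑E₆ ^ 2) * jFunction = algebraMap ℚ (ℍ → ℂ) 1728 * ⇑E₄ ^ 3 := by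
      ext τ
      have hΔ := ModularForm.discriminant_ne_zero τ
      simp only [Pi.mul_apply, Pi.sub_apply, Pi.pow_apply, hdisc, jFunction_eq, map_ofNat,
        Pi.ofNat_apply]
      field_simp
    rw [hj]
    exact mul_mem (ratQExpansion.algebraMap_mem _) (pow_mem h4 3)

lemma heckeFun_diagGQ_mem_ratQFraction {N : ℕ} (hN : 0 < N) :
    ⇑(heckeFun (diagGQ hN)) ∈ ratQFraction := by
  obtain ⟨D, hD, hD0, hDj⟩ := jFunction_mem_ratQFraction
  exact ⟨_, comp_diagGQ_mem_ratQExpansion hN hD, fun τ ↦ hD0 _,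
    comp_diagGQ_mem_ratQExpansion hN hDj⟩

/-! ### Rationality of polynomial relations -/

section RationalStructure

variable {ι K L : Type*} [Field K] [Field L] [Algebra K L]

lemma exists_eq_sum_basis_smul_map_mapRingHom (b : Module.Basis ι K L) (F : L[X][X]) :
    ∃ c : ι →₀ K[X][X], F = c.sum fun i G ↦ b i • G.map (mapRingHom (algebraMap K L)) := by
  let φ : K[X][X] →ₐ[K] L[X][X] := mapAlgHom (mapAlgHom (Algebra.ofId K L))
  refine exists_eq_sum_basis_smul b φ.toLinearMap (eq_top_iff.mpr fun F _ ↦ ?_) F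
  induction F using Polynomial.induction_on' with
  | add F G hF hG => exact add_mem (hF trivial) (hG trivial)
  | monomial k p =>
    induction p using Polynomial.induction_on' with
    | add p q hp hq => exact map_add (monomial k) p q ▸ add_mem (hp trivial) (hq trivial)
    | monomial m a =>
      have hsmul : monomial k (monomial m a) = a • φ (monomial k (monomial m 1)) := by
        simp [φ, smul_monomial]
      rw [hsmul]
      exact Submodule.smul_mem _ _ (Submodule.subset_span ⟨_, rfl⟩)

lemma exists_monic_mem_span_range {v : ι → L} {c : ι →₀ K[X][X]} {F : L[X][X]} (hF : F.Monic)
    (hc : F = c.sum fun i G ↦ v i • G.map (mapRingHom (algebraMap K L))) :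
    ∃ G ∈ Submodule.span K (Set.range c), G.Monic ∧ G.natDegree = F.natDegree := by
  obtain ⟨π, hπ⟩ := LinearMap.exists_leftInverse_of_injective (Algebra.linearMap K L)
    (LinearMap.ker_eq_bot.mpr (algebraMap K L).injective)
  -- `G` is `F` with the retraction `π` applied to each coefficient.
  let G : K[X][X] := c.sum fun i H ↦ π (v i) • H
  have hcoeff (k m : ℕ) : (G.coeff k).coeff m = π ((F.coeff k).coeff m) := by
    simp only [G, hc, Finsupp.sum, finsetSum_coeff, coeff_smul, coeff_map, coe_mapRingHom, map_sum]
    refine Finset.sum_congr rfl fun i _ ↦ ?_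
    rw [smul_eq_mul, smul_eq_mul, mul_comm (v i), ← Algebra.smul_def, map_smul, smul_eq_mul,
      mul_comm]
  have hle : G.natDegree ≤ F.natDegree := natDegree_le_iff_coeff_eq_zero.mpr fun k hk ↦ by
    ext m
    rw [hcoeff, coeff_eq_zero_of_natDegree_lt hk, coeff_zero, coeff_zero, map_zero]
  have hlead : G.coeff F.natDegree = 1 := by
    ext m
    rw [hcoeff, hF.coeff_natDegree, coeff_one, coeff_one]
    split_ifs
    · simpa using LinearMap.congr_fun hπ 1
    · exact map_zero π
  exact ⟨G, Submodule.sum_mem _ fun i _ ↦ Submodule.smul_mem _ _ (Submodule.subset_span ⟨i, rfl⟩),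
    monic_of_natDegree_le_of_coeff_eq_one _ hle hlead,
    natDegree_eq_of_le_of_coeff_ne_zero hle (hlead ▸ one_ne_zero)⟩

end RationalStructure

section AevalAeval

variable {R A B : Type*} [CommRing R] [CommRing A] [Algebra R A] [CommRing B] [Algebra R B]

lemma aevalAeval_algHom_apply (φ : A →ₐ[R] B) (x y : A) (G : R[X][X]) :
    aevalAeval (φ x) (φ y) G = φ (aevalAeval x y G) := by
  have h : aevalAeval (φ x) (φ y) = φ.comp (aevalAeval (R := R) x y) :=
    (aevalAevalEquiv R B).symm.injective (by simp)
  exact DFunLike.congr_fun h G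

lemma aevalAeval_mem {S : Subalgebra R A} {x y : A} (hx : x ∈ S) (hy : y ∈ S) (G : R[X][X]) :
    aevalAeval x y G ∈ S := by
  have h := aevalAeval_algHom_apply S.val ⟨x, hx⟩ ⟨y, hy⟩ G
  exact h ▸ SetLike.coe_mem _

lemma aevalAeval_map_mapRingHom_algebraMap [Algebra A B] [IsScalarTower R A B] (x y : B)
    (G : R[X][X]) :
    aevalAeval x y (G.map (mapRingHom (algebraMap R A))) = aevalAeval x y G := by
  have h : ((aevalAeval (R := A) x y).restrictScalars R).comp
      (mapAlgHom (mapAlgHom (Algebra.ofId R A))) = aevalAeval x y :=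
    (aevalAevalEquiv R B).symm.injective (by simp)
  exact DFunLike.congr_fun h G

end AevalAeval

lemma prod_X_sub_C_dvd_of_forall_isRoot {R : Type*} [CommRing R] [IsDomain R] {s : Finset R}
    {p : R[X]} (h : ∀ a ∈ s, p.IsRoot a) : ∏ a ∈ s, (X - C a) ∣ p := by
  rcases eq_or_ne p 0 with rfl | hp
  · exact dvd_zero _
  · exact (Multiset.prod_X_sub_C_dvd_iff_le_roots hp s.val).mpr
      ((Multiset.le_iff_subset s.nodup).mpr fun a ha ↦ (mem_roots hp).mpr (h a ha))

namespace moderateAtCusps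

variable {f : moderateAtCusps} (hf : (MulAction.orbit SL(2, ℤ) f).Finite)

lemma eval_map_evalJ (G : ℂ[X][X]) (f : moderateAtCusps) :
    (G.map evalJ).eval f = aevalAeval jFun f G := by
  induction G using Polynomial.induction_on' with
  | add F G hF hG => rw [Polynomial.map_add, eval_add, hF, hG, map_add]
  | monomial k p => simp [evalJ, aevalAeval]

lemma aevalAeval_orbitRelation : aevalAeval jFun f (orbitRelation hf) = 0 := by
  rw [← eval_map_evalJ, map_orbitRelation, orbitPoly, eval_prod]
  exact Finset.prod_eq_zero (hf.mem_toFinset.mpr (MulAction.mem_orbit_self f)) (by simp)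

lemma orbitRelation_dvd {G : ℂ[X][X]} (hG : aevalAeval jFun f G = 0) :
    orbitRelation hf ∣ G := by
  rw [← Polynomial.map_dvd_map evalJ evalJ_injective (monic_orbitRelation hf),
    map_orbitRelation, orbitPoly]
  refine prod_X_sub_C_dvd_of_forall_isRoot fun b hb ↦ ?_
  obtain ⟨γ, rfl⟩ := hf.mem_toFinset.mp hb
  rw [IsRoot, eval_map_evalJ]
  have h := aevalAeval_algHom_apply (MulSemiringAction.toAlgHom ℂ moderateAtCusps γ) jFun f G
  rwa [hG, map_zero, MulSemiringAction.toAlgHom_apply, MulSemiringAction.toAlgHom_apply,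
    smul_jFun] at h

lemma exists_map_eq_orbitRelation (hfQ : ⇑f ∈ ratQFraction) :
    ∃ G : ℚ[X][X], G.map (mapRingHom (algebraMap ℚ ℂ)) = orbitRelation hf := by
  let b := Module.Basis.ofVectorSpace ℚ ℂ
  obtain ⟨c, hc⟩ := exists_eq_sum_basis_smul_map_mapRingHom b (orbitRelation hf)
  obtain ⟨G, hG, hmonic, hdeg⟩ := exists_monic_mem_span_range (monic_orbitRelation hf) hc
  have hsum : c.sum (fun i H ↦ b i • aevalAeval jFun f H) = 0 := by
    rw [← aevalAeval_orbitRelation hf, hc, map_finsuppSum]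
    refine Finsupp.sum_congr fun i _ ↦ ?_
    rw [map_smul, aevalAeval_map_mapRingHom_algebraMap]
  have hmem (i) : ⇑(aevalAeval jFun f (c i)) ∈ ratQFraction := by
    have h := aevalAeval_algHom_apply (moderateAtCusps.val.restrictScalars ℚ) jFun f (c i)
    exact h.subst (motive := (· ∈ ratQFraction))
      (aevalAeval_mem jFunction_mem_ratQFraction hfQ (c i))
  have hker (i) : aevalAeval jFun f (c i) = 0 := by
    by_cases hi : i ∈ c.support
    · refine Subtype.ext (eq_zero_of_sum_smul_eq_zero_of_mem_ratQFraction b.linearIndependent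
        (fun i _ ↦ hmem i) ?_ i hi)
      simpa [Finsupp.sum] using congrArg moderateAtCusps.val hsum
    · rw [Finsupp.notMem_support_iff.mp hi]
      exact map_zero _
  have hG0 : aevalAeval jFun f G = 0 :=
    (Submodule.span_le (p := LinearMap.ker (aevalAeval (R := ℚ) jFun f).toLinearMap)).mpr
      (Set.range_subset_iff.mpr hker) hG
  refine ⟨G, (eq_of_monic_of_dvd_of_natDegree_le (monic_orbitRelation hf) (hmonic.map _)
    (orbitRelation_dvd hf ?_) ?_)⟩
  · rw [aevalAeval_map_mapRingHom_algebraMap, hG0]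
  · rw [hmonic.natDegree_map, hdeg]

end moderateAtCusps

/-! ### The modular polynomials -/

lemma exists_mvPolynomial_aeval_eq_zero_iff {R K A : Type*} [CommRing R] [IsDomain R] [Field K]
    [Algebra R K] [IsFractionRing R K] [CommRing A] [IsDomain A] [Algebra R A]
    [FaithfulSMul R A] [Algebra K A] [IsScalarTower R K A] (G : K[X][X]) :
    ∃ P : MvPolynomial (Fin 2) R,
      ∀ z w : A, MvPolynomial.aeval ![z, w] P = 0 ↔ aevalAeval z w G = 0 := by
  have hG (z w : A) :
      MvPolynomial.aeval ![z, w] (Bivariate.equivMvPolynomial K G) = aevalAeval z w G := by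
    have h : (MvPolynomial.aeval ![z, w]).comp (Bivariate.equivMvPolynomial K).toAlgHom =
        aevalAeval z w := (aevalAevalEquiv K A).symm.injective (by simp)
    exact DFunLike.congr_fun h G
  let _ : Algebra (MvPolynomial (Fin 2) R) (MvPolynomial (Fin 2) K) :=
    MvPolynomial.algebraMvPolynomial
  obtain ⟨⟨P, ⟨_, r, hr, rfl⟩⟩, hP⟩ := IsLocalization.surj
    ((nonZeroDivisors R).map (MvPolynomial.C (σ := Fin 2))) (Bivariate.equivMvPolynomial K G)
  refine ⟨P, fun z w ↦ ?_⟩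
  have h := congrArg (MvPolynomial.aeval ![z, w]) hP
  rw [map_mul, hG, MvPolynomial.algebraMap_def, MvPolynomial.aeval_map_algebraMap,
    MvPolynomial.aeval_map_algebraMap, MvPolynomial.aeval_C] at h
  have hr0 : algebraMap R A r ≠ 0 := by
    simpa using nonZeroDivisors.ne_zero hr
  rw [← h, mul_eq_zero, or_iff_left hr0]

lemma exists_mvPolynomial_int_aeval_eq_zero_iff {N : ℕ} (hN : 0 < N) :
    ∃ P : MvPolynomial (Fin 2) ℤ, ∀ τ w, MvPolynomial.aeval ![jFunction τ, w] P = 0 ↔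
      ∃ γ : SL(2, ℤ), heckeFun (diagGQ hN) (γ • τ) = w := by
  obtain ⟨G, hG⟩ := moderateAtCusps.exists_map_eq_orbitRelation
    (finite_orbit_heckeFun (diagGQ hN)) (heckeFun_diagGQ_mem_ratQFraction hN)
  obtain ⟨P, hP⟩ := exists_mvPolynomial_aeval_eq_zero_iff (R := ℤ) (A := ℂ) G
  refine ⟨P, fun τ w ↦ ?_⟩
  rw [hP, ← aevalAeval_map_mapRingHom_algebraMap (A := ℂ), hG, coe_aevalAeval_eq_evalEval,
    moderateAtCusps.evalEval_orbitRelation_eq_zero_iff]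

lemma exists_mem_GQdet_and_jFunction_eq_iff {N : ℕ} (hN : 0 < N) (τ : ℍ) (w : ℂ) :
    (∃ (τ' : ℍ) (g : GQ), g ∈ GQdet N ∧ jFunction τ' = jFunction τ ∧
      jFunction (gqSmul g τ') = w) ↔ ∃ γ : SL(2, ℤ), heckeFun (diagGQ hN) (γ • τ) = w := by
  obtain ⟨P, hP⟩ := exists_mvPolynomial_int_aeval_eq_zero_iff hN
  constructor
  · rintro ⟨τ', g, hg, hτ, rfl⟩
    obtain ⟨γ, hγ⟩ := heckeFun_mem_orbit_diagGQ hN hg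
    -- Going through `P` replaces the fact that `j` separates the `SL(2, ℤ)`-orbits.
    rw [← hP, ← hτ, hP]
    exact ⟨γ⁻¹, congrArg (moderateAtCusps.evalAt τ') hγ⟩
  · rintro ⟨γ, rfl⟩
    exact ⟨γ • τ, diagGQ hN, diagGQ_mem_GQdet hN, jFunction_smul γ τ, rfl⟩

lemma aeval_modularPoly_eq_zero_iff {N : ℕ} (hN : 0 < N) (τ : ℍ) (w : ℂ) :
    MvPolynomial.aeval ![jFunction τ, w] (modularPoly N) = 0 ↔
      ∃ γ : SL(2, ℤ), heckeFun (diagGQ hN) (γ • τ) = w := by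
  have hex : ∃ P : MvPolynomial (Fin 2) ℤ, P ≠ 0 ∧ ∀ z w : ℂ,
      (MvPolynomial.aeval ![z, w]) P = 0 ↔
        ∃ (τ : ℍ) (g : GQ), g ∈ GQdet N ∧ jFunction τ = z ∧ jFunction (gqSmul g τ) = w := by
    obtain ⟨P, hP⟩ := exists_mvPolynomial_int_aeval_eq_zero_iff hN
    refine ⟨P, ?_, fun z w ↦ ?_⟩
    · rintro rfl
      refine Set.infinite_univ (α := ℂ) ((moderateAtCusps.finite_range_smul
        (finite_orbit_heckeFun (diagGQ hN)) I).subset fun w _ ↦ ?_)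
      exact (hP I w).mp (map_zero _)
    · obtain ⟨τ, rfl⟩ := jFunction_surjective z
      rw [hP, exists_mem_GQdet_and_jFunction_eq_iff hN]
  rw [modularPoly, dif_pos hex, hex.choose_spec.2, exists_mem_GQdet_and_jFunction_eq_iff hN]

/-! ### The Hecke image is strongly special -/

section StronglySpecial

variable {n : ℕ}

/-- The locus `Φ_{N l}(x_{i₀}, x_l) = 0` for all `l`. -/
def modularLocus (i₀ : Fin n) (N : Fin n → ℕ) : Set (Fin n → ℂ) :=
  {v | ∀ l, MvPolynomial.aeval ![v i₀, v l] (modularPoly (N l)) = 0}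

lemma mem_modularLocus_iff {i₀ : Fin n} {N : Fin n → ℕ} (hN : ∀ l, 0 < N l) {v : Fin n → ℂ}
    {τ : ℍ} (hτ : jFunction τ = v i₀) :
    v ∈ modularLocus i₀ N ↔ ∀ l, ∃ γ : SL(2, ℤ), heckeFun (diagGQ (hN l)) (γ • τ) = v l :=
  forall_congr' fun l ↦ by rw [← hτ, aeval_modularPoly_eq_zero_iff (hN l)]

lemma heckeImage_subset_modularLocus {g : Fin n → GQ} {i₀ : Fin n} (hi₀ : g i₀ = 1)
    {N : Fin n → ℕ} (hN : ∀ l, 0 < N l) (hg : ∀ l, g l ∈ GQdet (N l)) :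
    heckeImage g ⊆ modularLocus i₀ N := by
  rintro _ ⟨τ, rfl⟩
  refine (mem_modularLocus_iff (τ := τ) hN (by simp only [hi₀, gqSmul_one])).mpr fun l ↦ ?_
  exact (exists_mem_GQdet_and_jFunction_eq_iff (hN l) τ _).mp ⟨τ, g l, hg l, rfl, rfl⟩

lemma exists_finite_modularLocus_subset_sUnion_heckeImage (i₀ : Fin n) {N : Fin n → ℕ}
    (hN : ∀ l, 0 < N l) :
    ∃ 𝒢 : Set (Fin n → GQ),
      (heckeImage '' 𝒢).Finite ∧ modularLocus i₀ N ⊆ ⋃₀ (heckeImage '' 𝒢) := by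
  refine ⟨Set.range fun (γ : Fin n → SL(2, ℤ)) l ↦ diagGQ (hN l) * sl2ZtoGQ (γ l), ?_, ?_⟩
  · refine ((Set.Finite.pi' fun l ↦ finite_orbit_heckeFun (diagGQ (hN l))).image
      fun f ↦ Set.range fun τ l ↦ f l τ).subset ?_
    rintro _ ⟨_, ⟨γ, rfl⟩, rfl⟩
    refine ⟨fun l ↦ (γ l)⁻¹ • heckeFun (diagGQ (hN l)), fun l ↦ ⟨_, rfl⟩, ?_⟩
    simp only [smul_heckeFun, inv_inv]
    rfl
  · intro v hv
    obtain ⟨τ, hτ⟩ := jFunction_surjective (v i₀)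
    choose γ hγ using (mem_modularLocus_iff hN hτ).mp hv
    refine ⟨_, ⟨_, ⟨γ, rfl⟩, rfl⟩, τ, funext fun l ↦ ?_⟩
    simp only [gqSmul_mul, gqSmul_sl2ZtoGQ]
    exact hγ l

lemma eq_heckeImage_of_subset_modularLocus (hn : 0 < n) {g : Fin n → GQ} {i₀ : Fin n}
    {N : Fin n → ℕ} (hN : ∀ l, 0 < N l) {V : Set (Fin n → ℂ)} (hV : IsIrreducibleAlgSet V)
    (hgV : heckeImage g ⊆ V) (hVN : V ⊆ modularLocus i₀ N) : V = heckeImage g := by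
  obtain ⟨𝒢, hfin, hcover⟩ := exists_finite_modularLocus_subset_sUnion_heckeImage i₀ hN
  obtain ⟨_, ⟨g', -, rfl⟩, hVg'⟩ := hV.exists_subset_of_subset_sUnion hfin
    (Set.forall_mem_image.mpr fun g' _ ↦ isAlgebraicSet_heckeImage hn g') (hVN.trans hcover)
  exact (hVg'.trans (heckeImage_eq_of_subset hn (hgV.trans hVg')).ge).antisymm hgV

lemma isStronglySpecial_heckeImage (hn : 0 < n) (g : Fin n → GQ) :
    IsStronglySpecial (heckeImage g) := by
  refine ⟨isIrreducibleAlgSet_heckeImage hn g, not_exists_forall_heckeImage_apply_eq g, ?_⟩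
  let i₀ : Fin n := ⟨0, hn⟩
  rw [← heckeImage_mul_right g (g i₀)⁻¹]
  choose N hN hgN using fun i ↦ exists_mem_GQdet (g i * (g i₀)⁻¹)
  have hlocus : {v : Fin n → ℂ | ∀ r ∈ Set.range fun l ↦ (i₀, l, N l),
      MvPolynomial.aeval ![v r.1, v r.2.1] (modularPoly r.2.2) = 0} = modularLocus i₀ N :=
    Set.ext fun v ↦ Set.forall_mem_range
  refine ⟨Set.range fun l ↦ (i₀, l, N l), Set.forall_mem_range.mpr hN, ?_, fun V hV hgV hVR ↦ ?_⟩
  · exact hlocus ▸ heckeImage_subset_modularLocus (mul_inv_cancel _) hN hgN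
  · exact eq_heckeImage_of_subset_modularLocus hn hN hV hgV (hVR.trans_eq hlocus)

end StronglySpecial

end JPaper

/-- Lemma `lem_locus_irreducible`: for `g₁, ..., gₙ ∈ G`, the image of
the upper half plane under `f(z) = (j(g₁z), ..., j(gₙz))` is a geometrically irreducible
algebraic curve defined over `ℚ(j(S))`; moreover it is a strongly special subvariety of
`ℂⁿ` and contains infinitely many special points. -/
theorem heckeImage_irreducible_curve (n : ℕ) (hn : 0 < n) (g : Fin n → JPaper.GQ) :
    JPaper.IsAlgebraicSetOver JPaper.QjS (JPaper.heckeImage g) ∧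
    JPaper.IsIrreducibleAlgSet (JPaper.heckeImage g) ∧
    JPaper.IsAlgebraicCurve (JPaper.heckeImage g) ∧
    JPaper.IsStronglySpecial (JPaper.heckeImage g) ∧
    {v ∈ JPaper.heckeImage g | ∀ i, v i ∈ JPaper.jSpecialValues}.Infinite :=
  ⟨JPaper.isAlgebraicSetOver_heckeImage hn g, JPaper.isIrreducibleAlgSet_heckeImage hn g,
    JPaper.isAlgebraicCurve_heckeImage hn g, JPaper.isStronglySpecial_heckeImage hn g,
    JPaper.infinite_special_heckeImage hn g⟩
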